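/- arXiv:1707.02002 — 5 statements merged into one kernel-verified Lean document; each statement's English description precedes it below -/
import Mathlib

section
/- Let T be a tree on n vertices. Then (n−1)² ≤ W(T) ≤ (n³−n)/6, where W(T) = Σ_{{x,y}⊆V(T)} d(x,y) is the Wiener index. The lower bound is attained if and only if T is the star S_n, and the upper bound is attained if and only if T is the path P_n. -/
open SimpleGraph Finset

attribute [local instance] Classical.propDecidable

variable {V : Type*}

/-- Degree of a vertex as a real number. -/
noncomputable def degR [Fintype V] (G : SimpleGraph V) (x : V) : ℝ :=
  ((Finset.univ.filter fun y => G.Adj x y).card : ℝ)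

/-- Number of edges of a graph. -/
noncomputable def esize (G : SimpleGraph V) : ℕ := Nat.card G.edgeSet

/-- Dirichlet energy of a potential. -/
noncomputable def energyFn [Fintype V] (G : SimpleGraph V) (φ : V → ℝ) : ℝ :=
  (1/2) * ∑ u, ∑ v, if G.Adj u v then (φ u - φ v)^2 else 0

/-- Effective resistance between two vertices (unit resistors on edges),
via the Dirichlet variational principle: the reciprocal of the minimal energy
of a potential with value 1 at `x` and 0 at `y`. -/
noncomputable def eres [Fintype V] (G : SimpleGraph V) (x y : V) : ℝ :=
  (sInf {e : ℝ | ∃ φ : V → ℝ, φ x = 1 ∧ φ y = 0 ∧ e = energyFn G φ})⁻¹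

/-- The transition matrix of the simple random walk, killed at `y`. -/
noncomputable def hitMat [Fintype V] (G : SimpleGraph V) (y : V) : Matrix V V ℝ :=
  Matrix.of fun u v => if v = y then 0 else if G.Adj u v then (degR G u)⁻¹ else 0

/-- Expected hitting time `H_{xy}` of the simple random walk from `x` to `y`,
expressed as the sum of the survival probabilities of the walk killed at `y`. -/
noncomputable def hitting [Fintype V] (G : SimpleGraph V) (x y : V) : ℝ :=
  if x = y then 0 else ∑' k : ℕ, ∑ z, (hitMat G y ^ k) x z

/-- Resistance-centrality `R(x)`. -/
noncomputable def Rres [Fintype V] (G : SimpleGraph V) (x : V) : ℝ := ∑ y, eres G x y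

/-- Weighted resistance-centrality `R^w(x)`. -/
noncomputable def Rw [Fintype V] (G : SimpleGraph V) (x : V) : ℝ :=
  ∑ y, degR G y * eres G x y

/-- Kirchhoff index `Kf(G)`. -/
noncomputable def Kf [Fintype V] (G : SimpleGraph V) : ℝ :=
  (1/2) * ∑ x, ∑ y, eres G x y

/-- Additive degree-Kirchhoff index `Kf⁺(G)`. -/
noncomputable def KfPlus [Fintype V] (G : SimpleGraph V) : ℝ :=
  (1/2) * ∑ x, ∑ y, (degR G x + degR G y) * eres G x y

/-- Multiplicative degree-Kirchhoff index `Kf*(G)`. -/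
noncomputable def KfStar [Fintype V] (G : SimpleGraph V) : ℝ :=
  (1/2) * ∑ x, ∑ y, degR G x * degR G y * eres G x y

/-- Cover cost `CC(x) = Σ_y H_{xy}`. -/
noncomputable def coverCost [Fintype V] (G : SimpleGraph V) (x : V) : ℝ :=
  ∑ y, hitting G x y

/-- Reverse cover cost `RC(x) = Σ_y H_{yx}`. -/
noncomputable def reverseCoverCost [Fintype V] (G : SimpleGraph V) (x : V) : ℝ :=
  ∑ y, hitting G y x

/-- Centrality (transmission) `D(x) = Σ_y d(x,y)`. -/
noncomputable def Dcent [Fintype V] (G : SimpleGraph V) (x : V) : ℝ :=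
  ∑ y, (G.dist x y : ℝ)

/-- Weighted centrality `D^w(x) = Σ_y deg(y)·d(x,y)`. -/
noncomputable def Dw [Fintype V] (G : SimpleGraph V) (x : V) : ℝ :=
  ∑ y, degR G y * (G.dist x y : ℝ)

/-- Wiener index `W(G)`. -/
noncomputable def Wiener [Fintype V] (G : SimpleGraph V) : ℝ :=
  (1/2) * ∑ x, ∑ y, (G.dist x y : ℝ)

/-- `D_{T}(v)`: sum of distances from `v` to the vertices of its connected
component in `G'` (used for the branch trees of a unicyclic graph). -/
noncomputable def branchD [Fintype V] (G' : SimpleGraph V) (v : V) : ℝ :=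
  ∑ u, if G'.Reachable v u then (G'.dist v u : ℝ) else 0

/-- The set of edges of the cycle `c 0 - c 1 - ⋯ - c (l-1) - c 0`. -/
def cycleEdges {l : ℕ} [NeZero l] (c : Fin l → V) : Set (Sym2 V) :=
  Set.range fun i : Fin l => s(c i, c (i + 1))

/-- Distance from a vertex to a set of vertices. -/
noncomputable def distToSet [Fintype V] (G : SimpleGraph V) (x : V) (s : Set V) : ℕ :=
  sInf {d | ∃ y ∈ s, G.dist x y = d}

/-- `v` is the center of a star. -/
def IsStarCenter (G : SimpleGraph V) (v : V) : Prop := ∀ u, u ≠ v → G.Adj v u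

/-- `G` is a star. -/
def IsStar (G : SimpleGraph V) : Prop := ∃ v, IsStarCenter G v

/-- The lollipop graph `P_n^l` : a cycle `C_l` on `0,…,l-1` together with a
path on `l,…,n-1` attached at the cycle vertex `0`. -/
def lollipop (n l : ℕ) : SimpleGraph (Fin n) :=
  SimpleGraph.fromRel (fun a b =>
    (a.val + 1 = b.val ∧ b.val < l) ∨ (a.val = 0 ∧ b.val = l - 1) ∨
    (a.val = 0 ∧ b.val = l) ∨ (l ≤ a.val ∧ a.val + 1 = b.val))

/-- The graph `S_n^l` : a cycle `C_l` on `0,…,l-1` with `n - l` pendant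
vertices `l,…,n-1` attached at the cycle vertex `0`. -/
def starCycle (n l : ℕ) : SimpleGraph (Fin n) :=
  SimpleGraph.fromRel (fun a b =>
    (a.val + 1 = b.val ∧ b.val < l) ∨ (a.val = 0 ∧ b.val = l - 1) ∨
    (a.val = 0 ∧ l ≤ b.val))

/-- The cycle graph `C_n` on `Fin n`. -/
def cycleG (n : ℕ) : SimpleGraph (Fin n) :=
  SimpleGraph.fromRel (fun a b => a.val + 1 = b.val ∨ (a.val = 0 ∧ b.val = n - 1))

theorem wtb_pred {V : Type*} {G : SimpleGraph V} (hG : G.Connected) (v u : V) (k : ℕ)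
    (h : G.dist v u = k + 1) : ∃ w, G.Adj w u ∧ G.dist v w = k := by
  rw [SimpleGraph.dist_comm] at h
  obtain ⟨p, hp⟩ := hG.exists_walk_length_eq_dist u v
  cases p with
  | nil => simp at h
  | cons hadj q =>
    rename_i w
    refine ⟨w, hadj.symm, ?_⟩
    have h1 := SimpleGraph.dist_le q
    have h2 := hG.dist_triangle (u := u) (v := w) (w := v)
    have h3 := SimpleGraph.dist_eq_one_iff_adj.mpr hadj
    simp only [SimpleGraph.Walk.length_cons] at hp
    rw [SimpleGraph.dist_comm]
    omega

theorem wtb_max_le {V : Type*} (f : V → ℕ) (s : Finset V) (m : V) (hm : m ∈ s)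
    (hd : ∀ x ∈ s, ∀ k, f x = k + 1 → ∃ y ∈ s, f y = k) :
    Finset.range (f m + 1) ⊆ s.image f := by
  have key : ∀ j, ∀ x ∈ s, ∀ k, f x = k + j → ∃ y ∈ s, f y = k := by
    intro j
    induction j with
    | zero => intro x hx k h; exact ⟨x, hx, h⟩
    | succ j ih =>
      intro x hx k h
      obtain ⟨y, hy, hyk⟩ := hd x hx (k + j) (by omega)
      exact ih y hy k hyk
  intro k hk
  simp only [Finset.mem_range] at hk
  rw [Finset.mem_image]
  exact key (f m - k) m hm k (by omega)

theorem wtb_sum_le {V : Type*} (f : V → ℕ) : ∀ (n : ℕ) (s : Finset V), s.card = n →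
    (∀ x ∈ s, ∀ k, f x = k + 1 → ∃ y ∈ s, f y = k) →
    ∑ x ∈ s, (f x : ℝ) ≤ (n : ℝ) * (n - 1) / 2 ∧
    (∑ x ∈ s, (f x : ℝ) = (n : ℝ) * (n - 1) / 2 → Set.InjOn f s) := by
  intro n
  induction n with
  | zero =>
    intro s hs _
    rw [Finset.card_eq_zero] at hs
    subst hs
    simp
  | succ n ih =>
    intro s hs hd
    obtain ⟨m, hm, hmax⟩ := s.exists_max_image f (Finset.card_pos.mp (by omega))
    have hsub := wtb_max_le f s m hm hd
    have hle := Finset.card_le_card hsub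
    have hle2 := Finset.card_image_le (s := s) (f := f)
    rw [Finset.card_range] at hle
    have hfm : f m ≤ n := by omega
    obtain ⟨h1, -⟩ := ih (s.erase m) (by rw [Finset.card_erase_of_mem hm]; omega) (by
      intro x hx k hk
      have hx' := Finset.mem_of_mem_erase hx
      obtain ⟨y, hy, hyk⟩ := hd x hx' k hk
      refine ⟨y, Finset.mem_erase.mpr ⟨?_, hy⟩, hyk⟩
      rintro rfl
      have := hmax x hx'
      omega)
    have hsum := Finset.add_sum_erase s (fun x => (f x : ℝ)) hm
    have hfm' : (f m : ℝ) ≤ n := by exact_mod_cast hfm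
    push_cast
    constructor
    · rw [← hsum]; nlinarith
    · intro heq
      have : (n : ℝ) ≤ f m := by rw [← hsum] at heq; nlinarith
      have : n ≤ f m := by exact_mod_cast this
      apply Finset.card_image_iff.mp
      omega

theorem wtb_D {V : Type*} [Fintype V] {G : SimpleGraph V} (hG : G.Connected) (v : V) :
    ∑ u, (G.dist v u : ℝ) ≤ (Fintype.card V : ℝ) * (Fintype.card V - 1) / 2 ∧
    (∑ u, (G.dist v u : ℝ) = (Fintype.card V : ℝ) * (Fintype.card V - 1) / 2 →
      Function.Injective (G.dist v)) := by
  have := wtb_sum_le (G.dist v) (Fintype.card V) Finset.univ rfl (by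
    intro x _ k hk
    obtain ⟨w, _, hw⟩ := wtb_pred hG v x k hk
    exact ⟨w, Finset.mem_univ _, hw⟩)
  refine ⟨this.1, fun h => ?_⟩
  have := this.2 h
  simpa using this

theorem wtb_split {V : Type*} [Fintype V] {G : SimpleGraph V} (v : V)
    (hv : (G.induce {v}ᶜ).Connected) :
    ∑ x, ∑ y, (G.dist x y : ℝ) ≤ 2 * ∑ y, (G.dist v y : ℝ) +
      ∑ x : ({v}ᶜ : Set V), ∑ y : ({v}ᶜ : Set V), ((G.induce {v}ᶜ).dist x y : ℝ) := by
  have hs : ∀ f : V → ℝ, ∑ x, f x = f v + ∑ x : ({v}ᶜ : Set V), f x := by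
    intro f
    rw [Fintype.sum_eq_add_sum_subtype_ne f v]
    congr 1
  rw [hs]
  have h0 : ∑ y, (G.dist v y : ℝ) = ∑ x : ({v}ᶜ : Set V), (G.dist (x : V) v : ℝ) := by
    rw [hs]; simp [SimpleGraph.dist_comm]
  have h1 : ∑ x : ({v}ᶜ : Set V), ∑ y, (G.dist (x : V) y : ℝ)
      = ∑ x : ({v}ᶜ : Set V), (G.dist (x : V) v : ℝ) +
        ∑ x : ({v}ᶜ : Set V), ∑ y : ({v}ᶜ : Set V), (G.dist (x : V) y : ℝ) := by
    rw [← Finset.sum_add_distrib]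
    exact Finset.sum_congr rfl fun x _ => hs _
  have h2 : ∑ x : ({v}ᶜ : Set V), ∑ y : ({v}ᶜ : Set V), (G.dist (x : V) y : ℝ) ≤
      ∑ x : ({v}ᶜ : Set V), ∑ y : ({v}ᶜ : Set V), ((G.induce {v}ᶜ).dist x y : ℝ) := by
    refine Finset.sum_le_sum fun x _ => Finset.sum_le_sum fun y _ => ?_
    obtain ⟨p, hp⟩ := hv.exists_walk_length_eq_dist x y
    rw [← hp]
    have := SimpleGraph.dist_le (p.map (SimpleGraph.Embedding.induce ({v}ᶜ : Set V)).toHom)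
    rw [SimpleGraph.Walk.length_map] at this
    exact_mod_cast this
  linarith

theorem wtb_upper : ∀ (n : ℕ) {V : Type*} [Fintype V] {G : SimpleGraph V}, G.Connected →
    Fintype.card V = n → 
    ∑ x, ∑ y, (G.dist x y : ℝ) ≤ ((n : ℝ) ^ 3 - n) / 3 ∧
    (∑ x, ∑ y, (G.dist x y : ℝ) = ((n : ℝ) ^ 3 - n) / 3 →
      ∃ v, Function.Injective (G.dist v)) := by
  intro n
  induction n with
  | zero =>
    intro V _ G hG hn
    have := hG.nonempty
    have := Fintype.card_pos (α := V)
    omega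
  | succ n ih =>
    intro V _ G hG hn
    by_cases h0 : n = 0
    · subst h0
      have hs : Subsingleton V := Fintype.card_le_one_iff_subsingleton.mp (by omega)
      obtain ⟨v⟩ := hG.nonempty
      refine ⟨?_, fun _ => ⟨v, fun a b _ => Subsingleton.elim _ _⟩⟩
      have : ∀ x y : V, G.dist x y = 0 := fun x y => by
        rw [Subsingleton.elim x y, SimpleGraph.dist_self]
      simp [this]
    · have hnt : Nontrivial V := Fintype.one_lt_card_iff_nontrivial.mp (by omega)
      obtain ⟨v, hv⟩ := hG.exists_connected_induce_compl_singleton_of_finite_nontrivial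
      have hc : Fintype.card ({v}ᶜ : Set V) = n := by
        rw [Fintype.card_compl_set]; simp [hn]
      obtain ⟨h1, -⟩ := ih hv hc
      have h2 := wtb_split v hv
      obtain ⟨h3, h4⟩ := wtb_D hG v
      rw [hn] at h3 h4
      push_cast at h3 h4 ⊢
      constructor
      · nlinarith
      · intro he
        refine ⟨v, h4 (le_antisymm h3 ?_)⟩
        nlinarith

theorem wtb_iso {V : Type*} [Fintype V] {T : SimpleGraph V} (hT : T.IsTree) (n : ℕ)
    (hn : Fintype.card V = n) (v : V) (hv : Function.Injective (T.dist v)) :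
    Nonempty (SimpleGraph.pathGraph n ≃g T) := by
  have hlt : ∀ u, T.dist v u < n := by
    intro u
    have h := wtb_max_le (T.dist v) Finset.univ u (Finset.mem_univ _) (by
      intro x _ k hk
      obtain ⟨w, _, hw⟩ := wtb_pred hT.connected v x k hk
      exact ⟨w, Finset.mem_univ _, hw⟩)
    have h1 := Finset.card_le_card h
    have h2 := Finset.card_image_le (s := (Finset.univ : Finset V)) (f := T.dist v)
    rw [Finset.card_range] at h1
    rw [Finset.card_univ] at h2
    omega
  let f : V → Fin n := fun u => ⟨T.dist v u, hlt u⟩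
  have hf : Function.Injective f := fun a b h => hv (by simpa [f] using h)
  have hb : Function.Bijective f :=
    (Fintype.bijective_iff_injective_and_card f).mpr ⟨hf, by simp [hn]⟩
  have hstep : ∀ a b, T.dist v a + 1 = T.dist v b → T.Adj a b := by
    intro a b h
    obtain ⟨w, hw, hd⟩ := wtb_pred hT.connected v b _ h.symm
    rwa [hv hd] at hw
  refine ⟨SimpleGraph.Iso.symm ⟨Equiv.ofBijective f hb, ?_⟩⟩
  intro a b
  rw [SimpleGraph.pathGraph_adj]
  simp only [Equiv.ofBijective_apply, f]
  constructor
  · rintro (h | h)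
    · exact hstep a b h
    · exact (hstep b a h).symm
  · intro h
    rcases hT.dist_eq_dist_add_one_of_adj v h with h | h <;> omega

theorem wtb_pathsum (n : ℕ) :
    ∑ i ∈ Finset.range n, ∑ j ∈ Finset.range n, |(i : ℝ) - j| = ((n : ℝ) ^ 3 - n) / 3 := by
  have h1 : ∀ n : ℕ, ∑ j ∈ Finset.range n, ((n : ℝ) - j) = n * (n + 1) / 2 := by
    intro n
    have : ∀ m : ℕ, ∑ j ∈ Finset.range m, ((n : ℝ) - j) = n * m - m * (m - 1) / 2 := by
      intro m
      induction m with
      | zero => simp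
      | succ m ih => rw [Finset.sum_range_succ, ih]; push_cast; ring
    rw [this]; ring
  have h2 : ∀ n : ℕ, ∑ j ∈ Finset.range n, |(n : ℝ) - j| = n * (n + 1) / 2 := by
    intro n
    rw [← h1]
    refine Finset.sum_congr rfl fun j hj => abs_of_nonneg ?_
    have : (j : ℝ) ≤ n := by exact_mod_cast (Finset.mem_range.mp hj).le
    linarith
  have h3 : ∀ n : ℕ, ∑ j ∈ Finset.range n, |(j : ℝ) - n| = n * (n + 1) / 2 := by
    intro n
    rw [← h2]
    exact Finset.sum_congr rfl fun j hj => abs_sub_comm _ _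
  induction n with
  | zero => simp
  | succ n ih =>
    simp only [Finset.sum_range_succ, Finset.sum_add_distrib]
    rw [ih, h2, h3]
    push_cast
    simp
    ring

theorem wtb_path {V : Type*} [Fintype V] {T : SimpleGraph V} (hT : T.Connected) (n : ℕ)
    (e : SimpleGraph.pathGraph n ≃g T) :
    ((n : ℝ) ^ 3 - n) / 3 ≤ ∑ x, ∑ y, (T.dist x y : ℝ) := by
  have hw : ∀ (x y : V) (p : T.Walk x y),
      |((e.symm x : Fin n) : ℝ) - ((e.symm y : Fin n) : ℝ)| ≤ p.length := by
    intro x y p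
    induction p with
    | nil => simp
    | cons h q ih =>
      rename_i a b c
      have h' := e.symm.map_rel_iff.mpr h
      rw [SimpleGraph.pathGraph_adj] at h'
      rw [SimpleGraph.Walk.length_cons]
      push_cast
      have h'' : |((e.symm a : Fin n) : ℝ) - ((e.symm b : Fin n) : ℝ)| ≤ 1 := by
        rcases h' with h' | h'
        · have h2 : ((e.symm a : Fin n) : ℝ) + 1 = ((e.symm b : Fin n) : ℝ) := by
            exact_mod_cast h'
          rw [abs_le]; constructor <;> linarith
        · have h2 : ((e.symm b : Fin n) : ℝ) + 1 = ((e.symm a : Fin n) : ℝ) := by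
            exact_mod_cast h'
          rw [abs_le]; constructor <;> linarith
      have := abs_sub_le ((e.symm a : Fin n) : ℝ) ((e.symm b : Fin n) : ℝ) ((e.symm c : Fin n) : ℝ)
      linarith
  have hd : ∀ x y : V, |((e.symm x : Fin n) : ℝ) - ((e.symm y : Fin n) : ℝ)| ≤ T.dist x y := by
    intro x y
    obtain ⟨p, hp⟩ := hT.exists_walk_length_eq_dist x y
    rw [← hp]
    exact hw x y p
  calc ((n : ℝ) ^ 3 - n) / 3 = ∑ i : Fin n, ∑ j : Fin n, |((i : ℕ) : ℝ) - ((j : ℕ) : ℝ)| := by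
        rw [← wtb_pathsum, ← Fin.sum_univ_eq_sum_range
          (fun i => ∑ j ∈ Finset.range n, |(i : ℝ) - j|)]
        refine Finset.sum_congr rfl fun i _ => ?_
        rw [← Fin.sum_univ_eq_sum_range (fun j => |((i : ℕ) : ℝ) - j|)]
    _ = ∑ x : V, ∑ y : V, |((e.symm x : Fin n) : ℝ) - ((e.symm y : Fin n) : ℝ)| := by
        rw [← e.symm.toEquiv.sum_comp]
        refine Finset.sum_congr rfl fun i _ => ?_
        rw [← e.symm.toEquiv.sum_comp]
        rfl
    _ ≤ _ := Finset.sum_le_sum fun x _ => Finset.sum_le_sum fun y _ => hd x y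

theorem wtb_adjsum {V : Type*} [Fintype V] {T : SimpleGraph V} (hT : T.IsTree) :
    ∑ x : V, ∑ y : V, (if x = y then (0 : ℝ) else if T.Adj x y then 1 else 2)
      = 2 * ((Fintype.card V : ℝ) - 1) ^ 2 := by
  have hE := hT.card_edgeFinset
  have hD := T.sum_degrees_eq_twice_card_edges
  have h1 : ∀ x y : V, (if x = y then (0 : ℝ) else if T.Adj x y then 1 else 2)
      = 2 - (if x = y then 2 else 0) - (if T.Adj x y then 1 else 0) := by
    intro x y
    by_cases hxy : x = y
    · subst hxy; simp
    · by_cases ha : T.Adj x y <;> simp [hxy, ha]; norm_num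
  have h2 : ∀ x : V, ∑ y : V, (if T.Adj x y then (1 : ℝ) else 0) = T.degree x := by
    intro x
    rw [Finset.sum_boole, ← SimpleGraph.card_neighborFinset_eq_degree,
      SimpleGraph.neighborFinset_eq_filter]
  have h3 : ∑ x : V, (T.degree x : ℝ) = 2 * ((Fintype.card V : ℝ) - 1) := by
    have e1 : ((∑ x : V, T.degree x : ℕ) : ℝ) = ((2 * #T.edgeFinset : ℕ) : ℝ) := by rw [hD]
    have e2 : ((#T.edgeFinset + 1 : ℕ) : ℝ) = (Fintype.card V : ℝ) := by rw [hE]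
    push_cast at e1 e2
    rw [e1, ← e2]; ring
  simp only [h1, Finset.sum_sub_distrib, h2, h3]
  simp
  ring

theorem wtb_ptwise {V : Type*} {T : SimpleGraph V} (hT : T.Connected) (x y : V) :
    (if x = y then (0 : ℝ) else if T.Adj x y then 1 else 2) ≤ T.dist x y := by
  split_ifs with h1 h2
  · positivity
  · rw [SimpleGraph.dist_eq_one_iff_adj.mpr h2]; simp
  · exact_mod_cast hT.one_lt_dist_of_ne_of_not_adj h1 h2

theorem wtb_star_of {V : Type*} [Fintype V] {T : SimpleGraph V} (hT : T.IsTree)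
    (h : ∀ x y : V, T.dist x y ≤ 2) : IsStar T := by
  rcases subsingleton_or_nontrivial V with hs | hs
  · obtain ⟨v⟩ := hT.connected.nonempty
    exact ⟨v, fun u hu => absurd (Subsingleton.elim u v) hu⟩
  · obtain ⟨l, hl⟩ := hT.exists_vert_degree_one_of_nontrivial
    obtain ⟨c, hc, huniq⟩ := SimpleGraph.degree_eq_one_iff_existsUnique_adj.mp hl
    refine ⟨c, fun u hu => ?_⟩
    by_cases hul : u = l
    · subst hul; exact hc.symm
    · have hna : ¬ T.Adj l u := fun ha => hu (huniq u ha)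
      have := hT.connected.one_lt_dist_of_ne_of_not_adj (Ne.symm hul) hna
      have h2 := h l u
      obtain ⟨w, hw, hd⟩ := wtb_pred hT.connected l u 1 (by omega)
      rw [SimpleGraph.dist_eq_one_iff_adj] at hd
      rwa [huniq w hd] at hw

theorem wtb_star_dist {V : Type*} {T : SimpleGraph V} (hT : T.Connected)
    (h : IsStar T) (x y : V) : T.dist x y ≤ 2 := by
  obtain ⟨c, hc⟩ := h
  have h1 : ∀ z, T.dist c z ≤ 1 := by
    intro z
    by_cases hz : z = c
    · subst hz; simp
    · exact (SimpleGraph.dist_eq_one_iff_adj.mpr (hc z hz)).le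
  have := hT.dist_triangle (u := x) (v := c) (w := y)
  rw [SimpleGraph.dist_comm (u := x) (v := c)] at this
  have := h1 x
  have := h1 y
  omega


/-- For a tree `T` on `n` vertices,
`(n−1)² ≤ W(T) ≤ (n³−n)/6`, with equality on the left iff `T` is a star and
on the right iff `T` is a path. -/
theorem wiener_tree_bounds [Fintype V] (T : SimpleGraph V) (hT : T.IsTree)
    (n : ℕ) (hn : Fintype.card V = n) :
    ((n : ℝ) - 1)^2 ≤ Wiener T ∧ Wiener T ≤ ((n : ℝ)^3 - n)/6 ∧
    (Wiener T = ((n : ℝ) - 1)^2 ↔ IsStar T) ∧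
    (Wiener T = ((n : ℝ)^3 - n)/6 ↔ Nonempty (SimpleGraph.pathGraph n ≃g T)) := by

  have hW : Wiener T = (1/2) * ∑ x, ∑ y, (T.dist x y : ℝ) := rfl
  have hA := wtb_adjsum hT
  rw [hn] at hA
  obtain ⟨hU, hU2⟩ := wtb_upper n hT.connected hn
  have hp := wtb_ptwise hT.connected
  have hL : ∑ x : V, ∑ y : V, (if x = y then (0 : ℝ) else if T.Adj x y then 1 else 2) ≤
      ∑ x, ∑ y, (T.dist x y : ℝ) :=
    Finset.sum_le_sum fun x _ => Finset.sum_le_sum fun y _ => hp x y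
  refine ⟨by rw [hW]; linarith, by rw [hW]; linarith, ⟨fun h => ?_, fun h => ?_⟩,
    ⟨fun h => ?_, fun ⟨e⟩ => ?_⟩⟩
  · apply wtb_star_of hT
    have he : ∑ x : V, ∑ y : V, (if x = y then (0 : ℝ) else if T.Adj x y then 1 else 2) =
      ∑ x, ∑ y, (T.dist x y : ℝ) := by rw [hW] at h; linarith
    intro x y
    have h1 := (Finset.sum_eq_sum_iff_of_le
      (fun x _ => Finset.sum_le_sum fun y _ => hp x y)).mp he x (Finset.mem_univ _)
    have h2 := (Finset.sum_eq_sum_iff_of_le (fun y _ => hp x y)).mp h1 y (Finset.mem_univ _)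
    have h3 : (T.dist x y : ℝ) ≤ 2 := by
      rw [← h2]; split_ifs <;> norm_num
    exact_mod_cast h3
  · have hd := wtb_star_dist hT.connected h
    have he : ∑ x, ∑ y, (T.dist x y : ℝ) ≤
        ∑ x : V, ∑ y : V, (if x = y then (0 : ℝ) else if T.Adj x y then 1 else 2) := by
      refine Finset.sum_le_sum fun x _ => Finset.sum_le_sum fun y _ => ?_
      split_ifs with h1 h2
      · subst h1; simp
      · rw [SimpleGraph.dist_eq_one_iff_adj.mpr h2]; simp
      · exact_mod_cast hd x y
    rw [hW]; linarith
  · obtain ⟨v, hv⟩ := hU2 (by rw [hW] at h; linarith)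
    exact wtb_iso hT n hn v hv
  · have := wtb_path hT.connected n e
    rw [hW]; linarith
end

section
/- Let T be a tree on n vertices and v ∈ V(T). Then n−1 ≤ (2n−1)·D_T(v) − 2·W(T) ≤ n(n−1)(4n−5)/6. The lower bound holds with equality if and only if T is the star S_n with v as its center, and the upper bound holds with equality if and only if T is the path P_n with v as one of its end vertices. -/
open SimpleGraph Finset

attribute [local instance] Classical.propDecidable

variable {V : Type*}

lemma tw_pred {G : SimpleGraph V} (hG : G.Connected) {v x : V} {k : ℕ}
    (h : G.dist v x = k + 1) : ∃ z, G.Adj z x ∧ G.dist v z = k := by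
  obtain ⟨p, hp⟩ := hG.exists_walk_length_eq_dist x v
  rw [SimpleGraph.dist_comm, h] at hp
  cases p with
  | nil => simp at hp
  | cons hadj q =>
    rename_i z
    refine ⟨z, hadj.symm, ?_⟩
    simp at hp
    have h1 := SimpleGraph.dist_le q
    have h2 : G.dist v x ≤ G.dist v z + G.dist z x := hG.dist_triangle
    rw [SimpleGraph.dist_eq_one_iff_adj.2 hadj.symm] at h2
    rw [SimpleGraph.dist_comm] at h1
    omega

lemma tw_level {G : SimpleGraph V} (hG : G.Connected) {v x : V} {k j : ℕ}
    (h : G.dist v x = k + j) : ∃ z, G.dist v z = k := by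
  induction j generalizing x with
  | zero => exact ⟨x, h⟩
  | succ j ih =>
    obtain ⟨z, -, hz⟩ := tw_pred hG (k := k + j) h
    exact ih hz

lemma tw_bk [Fintype V] {G : SimpleGraph V} (hG : G.Connected) (v : V) (k : ℕ) :
    (univ.filter fun x => k < G.dist v x).card ≤ Fintype.card V - 1 - k := by
  rcases Finset.eq_empty_or_nonempty (univ.filter fun x => k < G.dist v x) with h | ⟨x, hx⟩
  · simp [h]
  · simp at hx
    have h1 : Finset.range (k+1) ⊆ (univ.filter fun x => ¬ k < G.dist v x).image (G.dist v) := by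
      intro i hi
      simp at hi
      obtain ⟨z, hz⟩ := tw_level hG (k := i) (j := G.dist v x - i) (v := v) (x := x) (by omega)
      simp
      exact ⟨z, by omega, hz⟩
    have h2 := (Finset.card_le_card h1).trans Finset.card_image_le
    have h3 := Finset.card_filter_add_card_filter_not (s := (univ : Finset V)) (fun x => k < G.dist v x)
    simp only [Finset.card_range, Finset.card_univ] at h2 h3
    omega

lemma tw_dist_lt [Fintype V] {G : SimpleGraph V} (hG : G.Connected) (v x : V) :
    G.dist v x < Fintype.card V := by
  by_contra hc
  have h0 : 0 < Fintype.card V := Fintype.card_pos_iff.2 ⟨v⟩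
  have h := tw_bk hG v (Fintype.card V - 1)
  have : 0 < (univ.filter fun x => Fintype.card V - 1 < G.dist v x).card :=
    Finset.card_pos.2 ⟨x, by simp; omega⟩
  omega

lemma tw_ind (m n : ℕ) (h : m ≤ n) :
    (m : ℝ) = ∑ k ∈ range n, if k < m then (1:ℝ) else 0 := by
  rw [← Finset.sum_filter]
  have : (range n).filter (fun k => k < m) = range m := by ext; simp; omega
  simp [this]

lemma tw_D [Fintype V] (G : SimpleGraph V) (hG : G.Connected) (v : V) :
    Dcent G v = ∑ k ∈ range (Fintype.card V), ((univ.filter fun x => k < G.dist v x).card : ℝ) := by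
  unfold Dcent
  rw [Finset.sum_congr rfl (fun x _ => tw_ind _ _ (tw_dist_lt hG v x).le), Finset.sum_comm]
  refine Finset.sum_congr rfl fun k _ => ?_
  simp

lemma tw_M [Fintype V] (G : SimpleGraph V) (hG : G.Connected) (v : V) :
    ∑ x, ∑ y, ((min (G.dist v x) (G.dist v y) : ℕ) : ℝ)
      = ∑ k ∈ range (Fintype.card V), ((univ.filter fun x => k < G.dist v x).card : ℝ)^2 := by
  have h : ∀ x y, ((min (G.dist v x) (G.dist v y) : ℕ) : ℝ) = ∑ k ∈ range (Fintype.card V),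
      (if k < G.dist v x then (1:ℝ) else 0) * (if k < G.dist v y then (1:ℝ) else 0) := by
    intro x y
    rw [tw_ind _ (Fintype.card V) ((min_le_left _ _).trans (tw_dist_lt hG v x).le)]
    refine Finset.sum_congr rfl fun k _ => ?_
    by_cases h1 : k < G.dist v x <;> by_cases h2 : k < G.dist v y <;> simp [h1, h2]
  simp_rw [h]
  rw [Finset.sum_congr rfl (fun x _ => Finset.sum_comm), Finset.sum_comm]
  refine Finset.sum_congr rfl fun k _ => ?_
  rw [sq, ← Finset.sum_mul_sum]
  simp

lemma tw_phi [Fintype V] (G : SimpleGraph V) (v : V) :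
    (2 * (Fintype.card V : ℝ) - 1) * Dcent G v - 2 * Wiener G =
      ∑ x, ∑ y, ((G.dist v x : ℝ) + G.dist v y - G.dist x y) - Dcent G v := by
  simp only [Finset.sum_sub_distrib, Finset.sum_add_distrib, Finset.sum_const, Finset.card_univ,
    nsmul_eq_mul, ← Finset.mul_sum, Wiener, Dcent]
  ring

lemma tw_closed (n : ℕ) : ∑ m ∈ range n, (2 * (m:ℝ)^2 - m) = (n : ℝ) * (n - 1) * (4 * n - 5) / 6 := by
  induction n with
  | zero => simp
  | succ n ih => rw [Finset.sum_range_succ, ih]; push_cast; ring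

lemma tw_closed' (n : ℕ) : ∑ k ∈ range n, (2 * ((n - 1 - k : ℕ):ℝ)^2 - ((n - 1 - k : ℕ) : ℝ))
    = (n : ℝ) * (n - 1) * (4 * n - 5) / 6 := by
  rw [← tw_closed, ← Finset.sum_range_reflect (fun m : ℕ => 2 * (m:ℝ)^2 - m)]

lemma tw_mono (a b : ℕ) (h : a ≤ b) : 2 * (a:ℝ)^2 - a ≤ 2 * (b:ℝ)^2 - b := by
  rcases h.eq_or_lt with rfl | h
  · rfl
  · have h1 : (a:ℝ) + 1 ≤ b := by exact_mod_cast h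
    have h0 : (0:ℝ) ≤ a := by positivity
    nlinarith

lemma tw_upper1 [Fintype V] (G : SimpleGraph V) (hG : G.Connected) (v : V) :
    (2 * (Fintype.card V : ℝ) - 1) * Dcent G v - 2 * Wiener G ≤
    ∑ k ∈ range (Fintype.card V), (2 * ((univ.filter fun x => k < G.dist v x).card : ℝ)^2
      - ((univ.filter fun x => k < G.dist v x).card : ℝ)) := by
  rw [tw_phi, Finset.sum_sub_distrib, ← tw_D G hG, ← Finset.mul_sum, ← tw_M G hG, Finset.mul_sum]
  refine sub_le_sub_right (Finset.sum_le_sum fun x _ => ?_) _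
  rw [Finset.mul_sum]
  refine Finset.sum_le_sum fun y _ => ?_
  have h1 : G.dist v x ≤ G.dist v y + G.dist y x := hG.dist_triangle
  have h2 : G.dist v y ≤ G.dist v x + G.dist x y := hG.dist_triangle
  rw [SimpleGraph.dist_comm (u := y)] at h1
  have : G.dist v x + G.dist v y ≤ 2 * min (G.dist v x) (G.dist v y) + G.dist x y := by omega
  have : ((G.dist v x : ℝ) + G.dist v y ≤ 2 * ((min (G.dist v x) (G.dist v y) : ℕ) : ℝ) + G.dist x y) := by
    exact_mod_cast this
  linarith

lemma tw_upper [Fintype V] (G : SimpleGraph V) (hG : G.Connected) (v : V) :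
    (2 * (Fintype.card V : ℝ) - 1) * Dcent G v - 2 * Wiener G ≤
      (Fintype.card V : ℝ) * (Fintype.card V - 1) * (4 * Fintype.card V - 5) / 6 := by
  refine (tw_upper1 G hG v).trans ?_
  rw [← tw_closed']
  exact Finset.sum_le_sum fun k _ => tw_mono _ _ (tw_bk hG v k)

lemma tw_upper_eq [Fintype V] (G : SimpleGraph V) (hG : G.Connected) (v : V)
    (h : (2 * (Fintype.card V : ℝ) - 1) * Dcent G v - 2 * Wiener G =
      (Fintype.card V : ℝ) * (Fintype.card V - 1) * (4 * Fintype.card V - 5) / 6) :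
    ∃ x, G.dist v x = Fintype.card V - 1 := by
  by_contra! hc
  have h0 : 0 < Fintype.card V := Fintype.card_pos_iff.2 ⟨v⟩
  have h1 : Fintype.card V ≠ 1 := by
    intro h1
    exact hc v (by simp [h1])
  refine absurd h (ne_of_lt ((tw_upper1 G hG v).trans_lt ?_))
  rw [← tw_closed']
  refine Finset.sum_lt_sum (fun k _ => tw_mono _ _ (tw_bk hG v k))
    ⟨Fintype.card V - 2, by simp; omega, ?_⟩
  have e : (univ.filter fun x => Fintype.card V - 2 < G.dist v x) = ∅ := by
    ext x
    have := hc x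
    have := tw_dist_lt hG v x
    simp
    omega
  have e2 : Fintype.card V - 1 - (Fintype.card V - 2) = 1 := by omega
  rw [e, e2]
  norm_num

lemma tw_path [Fintype V] (G : SimpleGraph V) (hG : G.Connected) (v x : V)
    (h : G.dist v x = Fintype.card V - 1) :
    Nonempty (SimpleGraph.pathGraph (Fintype.card V) ≃g G) ∧ G.degree v ≤ 1 := by
  have h0 : 0 < Fintype.card V := Fintype.card_pos_iff.2 ⟨v⟩
  let f : V → Fin (Fintype.card V) := fun y => ⟨G.dist v y, tw_dist_lt hG v y⟩
  have hs : Function.Surjective f := by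
    intro i
    obtain ⟨z, hz⟩ := tw_level hG (v := v) (x := x) (k := i.1) (j := G.dist v x - i.1)
      (by have := i.2; omega)
    exact ⟨z, Fin.ext hz⟩
  have hb : Function.Bijective f := (Fintype.bijective_iff_surjective_and_card f).2 ⟨hs, by simp⟩
  have hinj : ∀ a b, G.dist v a = G.dist v b → a = b := fun a b hab => hb.1 (Fin.ext hab)
  have key : ∀ a b, G.dist v a + 1 = G.dist v b → G.Adj a b := by
    intro a b hab
    obtain ⟨z, hz, hz2⟩ := tw_pred hG hab.symm
    rwa [hinj a z hz2.symm]
  refine ⟨⟨(RelIso.symm ⟨Equiv.ofBijective f hb, ?_⟩)⟩, ?_⟩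
  · intro a b
    simp only [Equiv.ofBijective_apply, SimpleGraph.pathGraph_adj, f]
    constructor
    · rintro (h | h)
      · exact key a b h
      · exact (key b a h).symm
    · intro hab
      have h1 : G.dist v b ≤ G.dist v a + G.dist a b := hG.dist_triangle
      have h2 : G.dist v a ≤ G.dist v b + G.dist b a := hG.dist_triangle
      rw [SimpleGraph.dist_eq_one_iff_adj.2 hab] at h1
      rw [SimpleGraph.dist_eq_one_iff_adj.2 hab.symm] at h2
      have h3 : G.dist v a ≠ G.dist v b := fun e => hab.ne (hinj a b e)
      omega
  · rw [← SimpleGraph.card_neighborFinset_eq_degree, Finset.card_le_one]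
    intro a ha b hb
    rw [SimpleGraph.mem_neighborFinset, ← SimpleGraph.dist_eq_one_iff_adj] at ha hb
    exact hinj a b (ha.trans hb.symm)

lemma tw_D_lower [Fintype V] (G : SimpleGraph V) (hG : G.Connected) (v : V) :
    (Fintype.card V : ℝ) - 1 ≤ Dcent G v ∧
    (Dcent G v ≤ (Fintype.card V : ℝ) - 1 → IsStarCenter G v) := by
  have e : (Fintype.card V : ℝ) - 1 = ∑ x : V, (if x = v then (0:ℝ) else 1) := by
    have : ∀ x : V, (if x = v then (0:ℝ) else 1) = 1 - if x = v then 1 else 0 := by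
      intro x; split_ifs <;> simp
    simp_rw [this]
    simp
  have hle : ∀ x ∈ (univ : Finset V), (if x = v then (0:ℝ) else 1) ≤ G.dist v x := by
    intro x _
    split_ifs with h
    · positivity
    · exact_mod_cast hG.pos_dist_of_ne (Ne.symm h)
  rw [e]
  refine ⟨Finset.sum_le_sum hle, fun h u hu => ?_⟩
  have h2 := (Finset.sum_eq_sum_iff_of_le hle).1 (le_antisymm (Finset.sum_le_sum hle) h) u (mem_univ u)
  rw [if_neg hu] at h2
  rw [← SimpleGraph.dist_eq_one_iff_adj]
  exact_mod_cast h2.symm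

lemma tw_diag [Fintype V] (G : SimpleGraph V) (v : V) :
    ∑ x, ∑ y, (if x = y then 2 * (G.dist v x : ℝ) else 0) = 2 * Dcent G v := by
  simp [Dcent, Finset.mul_sum]

lemma tw_phi_lower [Fintype V] (G : SimpleGraph V) (hG : G.Connected) (v : V) :
    Dcent G v ≤ (2 * (Fintype.card V : ℝ) - 1) * Dcent G v - 2 * Wiener G := by
  rw [tw_phi]
  have : 2 * Dcent G v ≤ ∑ x, ∑ y, ((G.dist v x : ℝ) + G.dist v y - G.dist x y) := by
    rw [← tw_diag]
    refine Finset.sum_le_sum fun x _ => Finset.sum_le_sum fun y _ => ?_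
    split_ifs with h
    · subst h; simp; linarith
    · have h1 : G.dist x y ≤ G.dist x v + G.dist v y := hG.dist_triangle
      rw [SimpleGraph.dist_comm (u := x) (v := v)] at h1
      have : (G.dist x y : ℝ) ≤ G.dist v x + G.dist v y := by exact_mod_cast h1
      linarith
  linarith

lemma tw_star [Fintype V] (G : SimpleGraph V) (hG : G.IsTree) (v : V) (h : IsStarCenter G v) :
    (2 * (Fintype.card V : ℝ) - 1) * Dcent G v - 2 * Wiener G = (Fintype.card V : ℝ) - 1 := by
  have hd : ∀ x, x ≠ v → G.dist v x = 1 := fun x hx => SimpleGraph.dist_eq_one_iff_adj.2 (h x hx)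
  have hD : Dcent G v = (Fintype.card V : ℝ) - 1 := by
    have : ∀ x : V, (G.dist v x : ℝ) = 1 - if x = v then 1 else 0 := by
      intro x
      split_ifs with hx
      · simp [hx]
      · simp [hd x hx]
    unfold Dcent
    simp_rw [this]
    simp
  rw [tw_phi]
  have : ∑ x, ∑ y, ((G.dist v x : ℝ) + G.dist v y - G.dist x y) = 2 * Dcent G v := by
    rw [← tw_diag]
    refine Finset.sum_congr rfl fun x _ => Finset.sum_congr rfl fun y _ => ?_
    split_ifs with hxy
    · subst hxy; simp; ring
    · by_cases hx : x = v
      · subst hx; simp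
      · by_cases hy : y = v
        · subst hy; simp [SimpleGraph.dist_comm]
        · have h1 : G.dist x y ≤ G.dist x v + G.dist v y := hG.connected.dist_triangle
          rw [SimpleGraph.dist_comm (u := x) (v := v), hd x hx, hd y hy] at h1
          have h2 : ¬ G.Adj x y := fun hadj =>
            hG.dist_ne_of_adj v hadj (by rw [hd x hx, hd y hy])
          have h3 := hG.connected.one_lt_dist_of_ne_of_not_adj hxy h2
          have h4 : G.dist x y = 2 := by omega
          rw [hd x hx, hd y hy, h4]; norm_num
  linarith

lemma tw_walk {n : ℕ} {i j : Fin n} (p : (SimpleGraph.pathGraph n).Walk i j) :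
    (j : ℕ) ≤ i + p.length ∧ (i : ℕ) ≤ j + p.length := by
  induction p with
  | nil => simp
  | cons h q ih =>
    rw [SimpleGraph.pathGraph_adj] at h
    simp only [SimpleGraph.Walk.length_cons]
    omega

lemma tw_pdist_le {n : ℕ} (k : ℕ) (i j : Fin n) (h : (j : ℕ) = i + k) :
    ∃ p : (SimpleGraph.pathGraph n).Walk i j, p.length = k := by
  induction k generalizing j with
  | zero =>
    have : i = j := Fin.ext (by omega)
    subst this
    exact ⟨.nil, rfl⟩
  | succ k ih =>
    have hj := j.2
    obtain ⟨p, hp⟩ := ih ⟨i + k, by omega⟩ rfl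
    exact ⟨p.concat (by rw [SimpleGraph.pathGraph_adj]; left; simp; omega), by simp [hp]⟩

lemma tw_dist {n : ℕ} {G : SimpleGraph V} (hG : G.Connected) (f : SimpleGraph.pathGraph n ≃g G)
    (i j : Fin n) : (G.dist (f i) (f j) : ℝ) = |(i : ℝ) - j| := by
  wlog hij : i ≤ j generalizing i j
  · rw [SimpleGraph.dist_comm, this j i (le_of_not_ge hij), abs_sub_comm]
  obtain ⟨k, hk⟩ := Nat.exists_eq_add_of_le (Fin.le_def.1 hij)
  have h : G.dist (f i) (f j) = k := by
    apply le_antisymm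
    · obtain ⟨p, hp⟩ := tw_pdist_le k i j hk
      have := SimpleGraph.dist_le (p.map f.toHom)
      simp only [SimpleGraph.Walk.length_map, hp] at this
      exact this
    · obtain ⟨p, hp⟩ := hG.exists_walk_length_eq_dist (f i) (f j)
      have := tw_walk ((p.map f.symm.toHom).copy (f.symm_apply_apply i) (f.symm_apply_apply j))
      simp only [SimpleGraph.Walk.length_copy, SimpleGraph.Walk.length_map, hp] at this
      omega
  rw [h, hk]
  push_cast
  rw [abs_sub_comm]
  simp

lemma tw_s1 (n : ℕ) : ∑ i ∈ range n, (i : ℝ) = n * (n - 1) / 2 := by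
  induction n with
  | zero => simp
  | succ n ih => rw [Finset.sum_range_succ, ih]; push_cast; ring

lemma tw_s2 (n : ℕ) : ∑ i ∈ range n, ∑ j ∈ range n, |(i : ℝ) - j| = n * (n^2 - 1) / 3 := by
  induction n with
  | zero => simp
  | succ n ih =>
    have e1 : ∑ i ∈ range n, |(i : ℝ) - n| = n * n - n * (n - 1) / 2 := by
      rw [← tw_s1, Finset.sum_congr rfl (g := fun i : ℕ => (n : ℝ) - i), Finset.sum_sub_distrib]
      · simp
      · intro i hi
        have : (i : ℝ) ≤ n := by exact_mod_cast (Finset.mem_range.1 hi).le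
        rw [abs_of_nonpos (by linarith)]; ring
    have e2 : ∑ i ∈ range n, |(n : ℝ) - i| = n * n - n * (n - 1) / 2 := by
      rw [← e1]; exact Finset.sum_congr rfl fun i _ => abs_sub_comm _ _
    simp_rw [Finset.sum_range_succ, Finset.sum_add_distrib]
    rw [ih, e1, e2]
    push_cast
    simp
    ring

lemma tw_path_value [Fintype V] {n : ℕ} {G : SimpleGraph V} (hG : G.Connected)
    (f : SimpleGraph.pathGraph n ≃g G) (z : Fin n) 
    (hz : (z : ℕ) = 0 ∨ (z : ℕ) + 1 = n) :
    (2 * (n : ℝ) - 1) * Dcent G (f z) - 2 * Wiener G = (n : ℝ) * (n - 1) * (4 * n - 5) / 6 := by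
  have hW : 2 * Wiener G = n * (n^2 - 1) / 3 := by
    rw [← tw_s2]
    unfold Wiener
    rw [← f.toEquiv.sum_comp]
    simp_rw [← f.toEquiv.sum_comp (fun y => (G.dist _ y : ℝ))]
    rw [← Fin.sum_univ_eq_sum_range (fun i => ∑ j ∈ range n, |(i : ℝ) - j|)]
    simp_rw [← Fin.sum_univ_eq_sum_range (fun j => |(_ : ℝ) - (j : ℝ)|)]
    rw [← mul_assoc]
    norm_num
    exact Finset.sum_congr rfl fun i _ => Finset.sum_congr rfl fun j _ => tw_dist hG f i j
  have hD : Dcent G (f z) = n * (n - 1) / 2 := by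
    unfold Dcent
    rw [← f.toEquiv.sum_comp]
    refine (Finset.sum_congr rfl (fun j _ => tw_dist hG f z j)).trans ?_
    rw [Fin.sum_univ_eq_sum_range (fun i => |(z : ℝ) - i|)]
    rcases hz with hz | hz
    · rw [hz, ← tw_s1]
      simp
    · rw [← tw_s1, ← Finset.sum_range_reflect]
      refine Finset.sum_congr rfl fun i hi => ?_
      have := Finset.mem_range.1 hi
      have e : (z : ℕ) = (n - 1 - i) + i := by omega
      rw [e]
      push_cast
      simp
  rw [hW, hD]
  ring

lemma tw_end [Fintype V] {n : ℕ} {G : SimpleGraph V}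
    (f : SimpleGraph.pathGraph n ≃g G) (z : Fin n) (h : G.degree (f z) ≤ 1) :
    (z : ℕ) = 0 ∨ (z : ℕ) + 1 = n := by
  by_contra! hc
  have hz := z.2
  rw [← SimpleGraph.card_neighborFinset_eq_degree, Finset.card_le_one] at h
  have ha : G.Adj (f z) (f ⟨z - 1, by omega⟩) := by
    rw [f.map_adj_iff, SimpleGraph.pathGraph_adj]; simp; omega
  have hb : G.Adj (f z) (f ⟨z + 1, by omega⟩) := by
    rw [f.map_adj_iff, SimpleGraph.pathGraph_adj]; simp
  have := f.injective (h _ ((SimpleGraph.mem_neighborFinset _ _ _).2 ha) _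
    ((SimpleGraph.mem_neighborFinset _ _ _).2 hb))
  simp at this

/-- For a tree `T` on `n` vertices and `v ∈ V(T)`,
`n−1 ≤ (2n−1)·D_T(v) − 2·W(T) ≤ n(n−1)(4n−5)/6`, with equality on the left
iff `T` is a star with center `v`, and on the right iff `T` is a path with
`v` as an end vertex. -/
theorem transmission_wiener_bounds [Fintype V] (T : SimpleGraph V) (hT : T.IsTree)
    (n : ℕ) (hn : Fintype.card V = n) (v : V) :
    (n : ℝ) - 1 ≤ (2 * (n : ℝ) - 1) * Dcent T v - 2 * Wiener T ∧
    (2 * (n : ℝ) - 1) * Dcent T v - 2 * Wiener T ≤ (n : ℝ) * (n - 1) * (4 * n - 5) / 6 ∧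
    ((2 * (n : ℝ) - 1) * Dcent T v - 2 * Wiener T = (n : ℝ) - 1 ↔ IsStarCenter T v) ∧
    ((2 * (n : ℝ) - 1) * Dcent T v - 2 * Wiener T = (n : ℝ) * (n - 1) * (4 * n - 5) / 6 ↔
      Nonempty (SimpleGraph.pathGraph n ≃g T) ∧ T.degree v ≤ 1) := by
  subst hn
  refine ⟨(tw_D_lower T hT.connected v).1.trans (tw_phi_lower T hT.connected v),
    tw_upper T hT.connected v, ⟨fun h => ?_, tw_star T hT v⟩, ⟨fun h => ?_, ?_⟩⟩
  · exact (tw_D_lower T hT.connected v).2 (h ▸ tw_phi_lower T hT.connected v)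
  · obtain ⟨x, hx⟩ := tw_upper_eq T hT.connected v h
    exact tw_path T hT.connected v x hx
  · rintro ⟨⟨f⟩, hv⟩
    obtain ⟨z, rfl⟩ := f.surjective v
    exact tw_path_value hT.connected f z (tw_end f z hv)
end

section
/- Let G = U(C_l; T_1,…,T_l) be an n-vertex unicyclic graph with unique cycle C_l = v_1v_2…v_lv_1, where T_i is the tree component of G − E(C_l) containing v_i. If x ∈ V(T_k), then R^w(x) = 2·R(x) + 2·d(x, v_k) − (n − l). -/
open SimpleGraph Finset

attribute [local instance] Classical.propDecidable

variable {V : Type*}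

/-- Laplacian. -/
noncomputable def lapl [Fintype V] (G : SimpleGraph V) (h : V → ℝ) (u : V) : ℝ :=
  ∑ w, if G.Adj u w then h u - h w else 0

lemma sum_mul_lapl [Fintype V] (G : SimpleGraph V) (f h : V → ℝ) :
    ∑ u, f u * lapl G h u =
      (1/2) * ∑ u, ∑ w, if G.Adj u w then (f u - f w) * (h u - h w) else 0 := by
  have h1 : ∑ u, f u * lapl G h u = ∑ u, ∑ w, if G.Adj u w then f u * (h u - h w) else 0 := by
    simp only [lapl, Finset.mul_sum, mul_ite, mul_zero]
  have h2 : ∑ u, f u * lapl G h u = ∑ u, ∑ w, if G.Adj u w then f w * (h w - h u) else 0 := by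
    rw [h1, Finset.sum_comm]
    simp only [G.adj_comm]
  have h3 : ∑ u, ∑ w, (if G.Adj u w then (f u - f w) * (h u - h w) else 0) =
      ∑ u, f u * lapl G h u + ∑ u, f u * lapl G h u := by
    nth_rewrite 1 [h1]
    rw [h2, ← Finset.sum_add_distrib]
    refine Finset.sum_congr rfl fun u _ => ?_
    rw [← Finset.sum_add_distrib]
    refine Finset.sum_congr rfl fun w _ => ?_
    split_ifs <;> ring
  rw [h3]; ring

lemma sum_mul_lapl_comm [Fintype V] (G : SimpleGraph V) (f h : V → ℝ) :
    ∑ u, f u * lapl G h u = ∑ u, h u * lapl G f u := by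
  rw [sum_mul_lapl, sum_mul_lapl]
  simp only [mul_comm]

lemma energy_eq [Fintype V] (G : SimpleGraph V) (h : V → ℝ) :
    energyFn G h = ∑ u, h u * lapl G h u := by
  rw [sum_mul_lapl, energyFn]; simp only [sq]

lemma energy_nonneg [Fintype V] (G : SimpleGraph V) (h : V → ℝ) : 0 ≤ energyFn G h := by
  unfold energyFn
  refine mul_nonneg (by norm_num) (Finset.sum_nonneg fun u _ => Finset.sum_nonneg fun w _ => ?_)
  split_ifs <;> positivity

lemma energy_zero_adj [Fintype V] (G : SimpleGraph V) (h : V → ℝ) (h0 : energyFn G h = 0)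
    (a b : V) (hab : G.Adj a b) : h a = h b := by
  unfold energyFn at h0
  have h1 : ∑ u, ∑ v, (if G.Adj u v then (h u - h v)^2 else 0) = 0 := by linarith
  have nn : ∀ u v, 0 ≤ (if G.Adj u v then (h u - h v)^2 else 0) := by
    intro u v; split_ifs <;> positivity
  rw [Finset.sum_eq_zero_iff_of_nonneg (fun u _ => Finset.sum_nonneg fun v _ => nn u v)] at h1
  have h2 := h1 a (Finset.mem_univ _)
  rw [Finset.sum_eq_zero_iff_of_nonneg (fun v _ => nn a v)] at h2
  have h3 := h2 b (Finset.mem_univ _)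
  rw [if_pos hab] at h3
  have := pow_eq_zero_iff (two_ne_zero) |>.1 h3
  linarith

lemma sum_delta [Fintype V] (f : V → ℝ) (x y : V) :
    ∑ u, f u * ((if u = x then 1 else 0) - (if u = y then (1:ℝ) else 0)) = f x - f y := by
  simp [mul_sub, Finset.sum_sub_distrib]

lemma lapl_lin [Fintype V] (G : SimpleGraph V) (f h : V → ℝ) (a b : ℝ) (u : V) :
    lapl G (fun v => a * f v + b * h v) u = a * lapl G f u + b * lapl G h u := by
  unfold lapl
  rw [Finset.mul_sum, Finset.mul_sum, ← Finset.sum_add_distrib]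
  refine Finset.sum_congr rfl fun w _ => ?_
  split_ifs <;> ring

lemma lapl_const [Fintype V] (G : SimpleGraph V) (a : ℝ) (u : V) :
    lapl G (fun _ => a) u = 0 := by
  simp [lapl]

lemma eres_of_pot [Fintype V] (G : SimpleGraph V) (h : V → ℝ) (x y : V)
    (hh : ∀ u, lapl G h u = (if u = x then 1 else 0) - (if u = y then (1:ℝ) else 0)) :
    eres G x y = h x - h y := by
  by_cases hxy : x = y
  · subst hxy
    have : {e : ℝ | ∃ φ : V → ℝ, φ x = 1 ∧ φ x = 0 ∧ e = energyFn G φ} = ∅ := by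
      ext e
      simp only [Set.mem_ofPred_eq, Set.mem_empty_iff_false, iff_false]
      rintro ⟨φ, h1, h2, -⟩
      linarith
    simp [eres, this]
  have hE : ∀ φ : V → ℝ, ∑ u, φ u * lapl G h u = φ x - φ y := by
    intro φ; simp only [hh]; exact sum_delta φ x y
  have hr : energyFn G h = h x - h y := by rw [energy_eq, hE]
  set r := h x - h y with hrdef
  have hr0 : 0 ≤ r := hr ▸ energy_nonneg G h
  have hrpos : 0 < r := by
    rcases hr0.lt_or_eq with h1 | h1
    · exact h1
    exfalso
    have h2 := energy_zero_adj G h (by rw [hr, ← h1])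
    have h3 : lapl G h x = 0 := by
      unfold lapl
      refine Finset.sum_eq_zero fun w _ => ?_
      split_ifs with hw
      · rw [h2 _ _ hw, sub_self]
      · rfl
    rw [hh x] at h3
    simp [hxy] at h3
  have hexp : ∀ (φ : V → ℝ) (a b : ℝ), energyFn G (fun v => a * φ v + b * h v) =
      a^2 * energyFn G φ + 2 * a * b * (φ x - φ y) + b^2 * r := by
    intro φ a b
    rw [← hr, energy_eq, energy_eq, energy_eq, ← hE φ]
    simp only [lapl_lin]
    have e1 : ∑ u, (a * φ u + b * h u) * (a * lapl G φ u + b * lapl G h u) =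
      a^2 * ∑ u, φ u * lapl G φ u + a * b * ∑ u, φ u * lapl G h u
       + a * b * ∑ u, h u * lapl G φ u + b^2 * ∑ u, h u * lapl G h u := by
      simp only [Finset.mul_sum, ← Finset.sum_add_distrib]
      refine Finset.sum_congr rfl fun w _ => ?_
      ring
    rw [e1, sum_mul_lapl_comm G h φ]; ring
  have hleast : IsLeast {e : ℝ | ∃ φ : V → ℝ, φ x = 1 ∧ φ y = 0 ∧ e = energyFn G φ} (r⁻¹) := by
    constructor
    · refine ⟨fun v => (-(h y) / r) * (fun _ => (1:ℝ)) v + r⁻¹ * h v, ?_, ?_, ?_⟩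
      · field_simp; rw [hrdef]; ring
      · field_simp; ring
      · rw [hexp, energy_eq]
        simp only [lapl_const]
        field_simp; simp
    · rintro e ⟨φ, h1, h2, rfl⟩
      have := energy_nonneg G (fun v => 1 * φ v + (-r⁻¹) * h v)
      rw [hexp, h1, h2] at this
      have e2 : (-r⁻¹)^2 * r = r⁻¹ := by field_simp
      rw [e2] at this
      linarith
  rw [eres, hleast.csInf_eq, inv_inv]

lemma exists_pot [Fintype V] (G : SimpleGraph V) (hc : G.Connected) (x y : V) :
    ∃ h : V → ℝ, ∀ u, lapl G h u = (if u = x then 1 else 0) - (if u = y then (1:ℝ) else 0) := by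
  let T : (V → ℝ) →ₗ[ℝ] (V → ℝ) :=
    { toFun := fun h u => lapl G h u + ∑ v, h v
      map_add' := by
        intro f g; funext u
        have := lapl_lin G f g 1 1 u
        simp only [one_mul] at this
        simp only [Pi.add_apply, Finset.sum_add_distrib]
        change lapl G (fun v => f v + g v) u + _ = _
        rw [this]; ring
      map_smul' := by
        intro a f; funext u
        have := lapl_lin G f f a 0 u
        simp only [zero_mul, add_zero] at this
        simp only [Pi.smul_apply, smul_eq_mul, RingHom.id_apply, ← Finset.mul_sum]
        change lapl G (fun v => a * f v) u + _ = _
        rw [this]; ring }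
  have hT : ∀ h u, T h u = lapl G h u + ∑ v, h v := fun _ _ => rfl
  have hcard : (0:ℝ) < Fintype.card V := by
    have : 0 < Fintype.card V := Fintype.card_pos_iff.2 ⟨x⟩
    exact_mod_cast this
  have hsum : ∀ h, ∑ u, T h u = Fintype.card V * ∑ v, h v := by
    intro h
    simp only [hT, Finset.sum_add_distrib]
    have := sum_mul_lapl_comm G (fun _ => 1) h
    simp only [one_mul, lapl_const, mul_zero, Finset.sum_const_zero] at this
    rw [this]; simp
  have hinj : Function.Injective T := by
    rw [← LinearMap.ker_eq_bot, LinearMap.ker_eq_bot']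
    intro h hh
    have h1 := hsum h
    rw [hh] at h1
    simp only [Pi.zero_apply, Finset.sum_const_zero] at h1
    have h2 : ∑ v, h v = 0 := by
      rcases mul_eq_zero.1 h1.symm with h | h
      · linarith
      · exact h
    have h3 : ∀ u, lapl G h u = 0 := by
      intro u
      have := hT h u
      rw [hh, h2] at this
      simpa using this.symm
    have h4 := energy_zero_adj G h (by rw [energy_eq]; simp [h3])
    have h5 : ∀ a b, h a = h b := by
      intro a b
      obtain ⟨w⟩ := hc.preconnected a b
      induction w with
      | nil => rfl
      | cons hab _ ih => rw [h4 _ _ hab, ih]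
    funext u
    have h6 : ∑ v, h v = Fintype.card V * h u := by
      rw [Finset.sum_congr rfl (fun v _ => h5 v u)]; simp
    rw [h2] at h6
    rcases mul_eq_zero.1 h6.symm with h | h
    · linarith
    · exact h
  obtain ⟨h, hh⟩ := (LinearMap.injective_iff_surjective.1 hinj)
    (fun u => (if u = x then 1 else 0) - (if u = y then (1:ℝ) else 0))
  refine ⟨h, fun u => ?_⟩
  have h1 := hsum h
  rw [hh] at h1
  have h7 : ∑ u, ((if u = x then 1 else 0) - (if u = y then (1:ℝ) else 0)) = 0 := by simp
  rw [h7] at h1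
  have h2 : ∑ v, h v = 0 := by
    rcases mul_eq_zero.1 h1.symm with h | h
    · linarith
    · exact h
  have := hT h u
  rw [hh, h2] at this
  simpa using this.symm

lemma eres_bridge [Fintype V] (G : SimpleGraph V) (hc : G.Connected) (x p u : V)
    (S : V → Prop) (hx : S x) (hp : S p) (hu : ¬ S u) (hadj : G.Adj p u)
    (hcut : ∀ a b, S a → ¬ S b → G.Adj a b → a = p ∧ b = u) :
    eres G x u = eres G x p + 1 := by
  obtain ⟨h, hh⟩ := exists_pot G hc x p
  set g : V → ℝ := fun v => if S v then 0 else 1 with hg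
  have hpu : p ≠ u := by rintro rfl; exact hu hp
  have hL : ∀ w, lapl G g w = (if w = u then 1 else 0) - (if w = p then (1:ℝ) else 0) := by
    intro w
    unfold lapl
    by_cases hw : S w
    · have hwu : w ≠ u := by rintro rfl; exact hu hw
      by_cases hwp : w = p
      · subst hwp
        rw [Finset.sum_eq_single u]
        · simp [hadj, hg, hw, hu, hwu]
        · intro b _ hb
          split_ifs with hwb
          · by_cases hSb : S b
            · simp [hg, hw, hSb]
            · exact absurd (hcut _ _ hw hSb hwb).2 hb
          · rfl
        · simp
      · rw [Finset.sum_eq_zero]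
        · simp [hwu, hwp]
        · intro b _
          split_ifs with hwb
          · by_cases hSb : S b
            · simp [hg, hw, hSb]
            · exact absurd (hcut _ _ hw hSb hwb).1 hwp
          · rfl
    · have hwp : w ≠ p := by rintro rfl; exact hw hp
      by_cases hwu : w = u
      · subst hwu
        rw [Finset.sum_eq_single p]
        · simp [hadj.symm, hg, hw, hp, hwp]
        · intro b _ hb
          split_ifs with hwb
          · by_cases hSb : S b
            · exact absurd (hcut _ _ hSb hw hwb.symm).1 hb
            · simp [hg, hw, hSb]
          · rfl
        · simp
      · rw [Finset.sum_eq_zero]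
        · simp [hwu, hwp]
        · intro b _
          split_ifs with hwb
          · by_cases hSb : S b
            · exact absurd (hcut _ _ hSb hw hwb.symm).2 hwu
            · simp [hg, hw, hSb]
          · rfl
  have e1 := sum_mul_lapl_comm G g h
  simp only [hL, hh] at e1
  rw [sum_delta, sum_delta] at e1
  have gx : g x = 0 := by simp [hg, hx]
  have gp : g p = 0 := by simp [hg, hp]
  have gu : g u = 1 := by simp [hg, hu]
  rw [eres_of_pot G h x p hh, eres_of_pot G (fun v => 1 * h v + (-1) * g v) x u]
  · simp only [gx, gu]
    rw [gx, gp] at e1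
    linarith
  · intro w
    rw [lapl_lin, hh, hL]; ring

lemma exists_parent [Fintype V] (G : SimpleGraph V) (l : ℕ) [NeZero l]
    (hconn : G.Connected) (c : Fin l → V) (hinj : Function.Injective c)
    (hadj : ∀ i : Fin l, G.Adj (c i) (c (i + 1))) :
    ∃ (D : V → ℕ) (p : V → V), (∀ u, G.Adj u (p u)) ∧ (∀ u, D (p u) = D u - 1) ∧
      (∀ i, p (c i) = c (i+1)) ∧ (∀ u, D u = 0 ↔ ∃ i, c i = u) ∧
      (∀ u i, D u ≤ G.dist u (c i)) := by
  have h1 : ∀ u, ∃ i, ∀ j, G.dist u (c i) ≤ G.dist u (c j) := fun u =>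
    Finite.exists_min (fun i => G.dist u (c i))
  choose m hm using h1
  let D : V → ℕ := fun u => G.dist u (c (m u))
  have hD0 : ∀ u, D u = 0 ↔ ∃ i, c i = u := by
    intro u
    constructor
    · intro h
      exact ⟨m u, ((hconn.dist_eq_zero_iff).1 h).symm⟩
    · rintro ⟨i, rfl⟩
      have := hm (c i) i
      rw [SimpleGraph.dist_self] at this
      exact Nat.le_zero.1 this
  have h2 : ∀ u, ∃ w, G.Adj u w ∧ D w = D u - 1 ∧ ∀ i, u = c i → w = c (i+1) := by
    intro u
    by_cases hu : ∃ i, c i = u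
    · obtain ⟨i, rfl⟩ := hu
      refine ⟨c (i+1), hadj i, ?_, ?_⟩
      · rw [(hD0 (c i)).2 ⟨i, rfl⟩, (hD0 (c (i+1))).2 ⟨_, rfl⟩]
      · intro j hj; rw [hinj hj]
    · obtain ⟨w, hw⟩ := hconn.exists_walk_length_eq_dist u (c (m u))
      obtain ⟨v, huv, q, rfl⟩ := SimpleGraph.Walk.exists_eq_cons_of_ne
        (fun h : u = c (m u) => hu ⟨_, h.symm⟩) w
      ·
        refine ⟨v, huv, ?_, fun i hi => absurd ⟨i, hi.symm⟩ hu⟩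
        have a1 : D v ≤ q.length := (hm v (m u)).trans (SimpleGraph.dist_le q)
        have a2 : D u ≤ D v + 1 := by
          refine (hm u (m v)).trans ?_
          have := hconn.dist_triangle (u := u) (v := v) (w := c (m v))
          rw [SimpleGraph.dist_eq_one_iff_adj.2 huv] at this
          change _ ≤ G.dist v (c (m v)) + 1
          omega
        have a3 : q.length + 1 = D u := by
          rw [← SimpleGraph.Walk.length_cons huv q]; exact hw
        omega
  choose p hp1 hp2 hp3 using h2
  exact ⟨D, p, hp1, hp2, fun i => hp3 _ i rfl, hD0, fun u i => hm u i⟩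

lemma edges_parent [Fintype V] (G : SimpleGraph V) (n l : ℕ) [NeZero l]
    (hn : Fintype.card V = n) (huni : esize G = n) (hl : 3 ≤ l)
    (c : Fin l → V) (hinj : Function.Injective c)
    (D : V → ℕ) (p : V → V) (h1 : ∀ u, G.Adj u (p u)) (h2 : ∀ u, D (p u) = D u - 1)
    (h3 : ∀ i, p (c i) = c (i+1)) (h4 : ∀ u, D u = 0 ↔ ∃ i, c i = u) :
    (∀ u, p (p u) ≠ u) ∧ ∀ a b, G.Adj a b ↔ (p a = b ∨ p b = a) := by
  have hpp : ∀ u, p (p u) ≠ u := by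
    intro u hu
    have a1 := h2 (p u)
    rw [hu, h2 u] at a1
    have a2 : D u = 0 := by omega
    obtain ⟨i, rfl⟩ := (h4 u).1 a2
    rw [h3, h3] at hu
    have := hinj hu
    have h5 : (1 + 1 : Fin l) = 0 := by
      rw [add_assoc] at this
      simpa using this
    have h6 := congrArg Fin.val h5
    rw [Fin.val_add, Fin.val_one', Fin.val_zero, Nat.mod_eq_of_lt (by omega : 1 < l),
      Nat.mod_eq_of_lt (by omega : 1 + 1 < l)] at h6
    omega
  refine ⟨hpp, ?_⟩
  let F : V → G.edgeSet := fun u => ⟨s(u, p u), h1 u⟩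
  have hF : Function.Injective F := by
    intro u v huv
    have := congrArg Subtype.val huv
    simp only [F, Sym2.eq_iff] at this
    rcases this with h | ⟨ha, hb⟩
    · exact h.1
    · exact absurd (by rw [hb, ← ha]) (hpp u)
  have hbij : Function.Bijective F := by
    rw [Fintype.bijective_iff_injective_and_card]
    refine ⟨hF, ?_⟩
    rw [hn, ← huni, esize, Nat.card_eq_fintype_card]
  intro a b
  constructor
  · intro hab
    obtain ⟨u, hu⟩ := hbij.2 ⟨s(a,b), hab⟩
    have := congrArg Subtype.val hu
    simp only [F, Sym2.eq_iff] at this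
    rcases this with ⟨rfl, h⟩ | ⟨rfl, h⟩
    · exact Or.inl h
    · exact Or.inr h
  · rintro (rfl | rfl)
    · exact h1 _
    · exact (h1 _).symm

theorem Rw_formula [Fintype V] (G : SimpleGraph V) (n l : ℕ) [NeZero l]
    (hn : Fintype.card V = n) (hconn : G.Connected) (huni : esize G = n)
    (hl : 3 ≤ l) (c : Fin l → V) (hinj : Function.Injective c)
    (hadj : ∀ i : Fin l, G.Adj (c i) (c (i + 1)))
    (k : Fin l) (x : V) (hx : (G.deleteEdges (cycleEdges c)).Reachable (c k) x) :
    Rw G x = 2 * Rres G x + 2 * (G.dist x (c k) : ℝ) - ((n : ℝ) - l) := by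
  obtain ⟨D, p, h1, h2, h3, h4, h5⟩ := exists_parent G l hconn c hinj hadj
  obtain ⟨hpp, hE⟩ := edges_parent G n l hn huni hl c hinj D p h1 h2 h3 h4
  have hDit : ∀ m u, D (p^[m] u) = D u - m := by
    intro m
    induction m with
    | zero => intro u; simp
    | succ m ih => intro u; rw [Function.iterate_succ_apply, ih, h2]; omega
  -- root
  have hroot : ∀ a b, (G.deleteEdges (cycleEdges c)).Adj a b → p^[D a] a = p^[D b] b := by
    have key : ∀ a, s(a, p a) ∉ cycleEdges c → p^[D a] a = p^[D (p a)] (p a) := by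
      intro a ha
      have h0 : D a ≠ 0 := by
        intro h0
        obtain ⟨i, rfl⟩ := (h4 a).1 h0
        exact ha ⟨i, by simp only [h3]⟩
      have : D a = D (p a) + 1 := by rw [h2]; omega
      rw [this, Function.iterate_succ_apply]
    intro a b hab
    rw [SimpleGraph.deleteEdges_adj] at hab
    obtain ⟨hab, hne⟩ := hab
    rcases (hE a b).1 hab with rfl | rfl
    · exact key _ hne
    · rw [Sym2.eq_swap] at hne
      exact (key _ hne).symm
  have hrx : p^[D x] x = c k := by
    have : ∀ a b, (G.deleteEdges (cycleEdges c)).Reachable a b → p^[D a] a = p^[D b] b := by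
      rintro a b ⟨w⟩
      induction w with
      | nil => rfl
      | cons hab _ ih => rw [hroot _ _ hab, ih]
    rw [← this _ _ hx, (h4 (c k)).2 ⟨k, rfl⟩]; rfl
  have hdist : G.dist x (c k) = D x := by
    apply le_antisymm _ (h5 x k)
    have : ∀ m u, G.dist u (p^[m] u) ≤ m := by
      intro m
      induction m with
      | zero => intro u; simp
      | succ m ih =>
        intro u
        rw [Function.iterate_succ_apply]
        have t := hconn.dist_triangle (u := u) (v := p u) (w := p^[m] (p u))
        rw [SimpleGraph.dist_eq_one_iff_adj.2 (h1 u)] at t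
        have := ih (p u)
        omega
    have := this (D x) x
    rwa [hrx] at this
  -- degree sum
  have hRw : Rw G x = ∑ u, (eres G x u + eres G x (p u)) := by
    have hd : ∀ y, degR G y = ∑ w, ((if p y = w then (1:ℝ) else 0) + (if p w = y then 1 else 0)) := by
      intro y
      rw [degR, Finset.card_filter]
      push_cast
      refine Finset.sum_congr rfl fun w _ => ?_
      by_cases a : p y = w
      · have b : p w ≠ y := by rw [← a]; exact hpp y
        simp [(hE y w).2 (Or.inl a), a, b]
      · by_cases b : p w = y
        · simp [(hE y w).2 (Or.inr b), a, b]
        · have : ¬ G.Adj y w := by rw [hE]; tauto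
          simp [this, a, b]
    unfold Rw
    simp only [hd, Finset.sum_mul, add_mul, Finset.sum_add_distrib]
    congr 1
    · refine Finset.sum_congr rfl fun y _ => ?_
      simp
    · rw [Finset.sum_comm]
      refine Finset.sum_congr rfl fun y _ => ?_
      simp
  -- bridges
  have hbr : ∀ u, D u ≠ 0 → eres G x (p u) - eres G x u =
      if (∃ m, p^[m] x = u) then 1 else -1 := by
    intro u hu
    have hnd : ¬ ∃ m, p^[m] (p u) = u := by
      rintro ⟨m, hm⟩
      have := hDit m (p u)
      rw [hm, h2] at this
      omega
    have hcut : ∀ a b, (∃ m, p^[m] a = u) → (¬ ∃ m, p^[m] b = u) → G.Adj a b →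
        a = u ∧ b = p u := by
      rintro a b ⟨m, hm⟩ hb hab
      rcases (hE a b).1 hab with rfl | rfl
      · cases m with
        | zero => simp at hm; subst hm; exact ⟨rfl, rfl⟩
        | succ m => exact absurd ⟨m, hm⟩ hb
      · exact absurd ⟨m+1, hm⟩ hb
    split_ifs with hxu
    · rw [eres_bridge G hconn x u (p u) (fun w => ∃ m, p^[m] w = u) hxu ⟨0, rfl⟩ hnd (h1 u) hcut]
      ring
    · rw [eres_bridge G hconn x (p u) u (fun w => ¬ ∃ m, p^[m] w = u) hxu hnd
        (fun h => h ⟨0, rfl⟩) (h1 u).symm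
        (fun a b ha hb hab => (hcut b a (not_not.1 hb) ha hab.symm).symm)]
      ring
  have hcyc : ∑ u ∈ Finset.univ.filter (fun u => D u = 0), (eres G x (p u) - eres G x u) = 0 := by
    have : Finset.univ.filter (fun u => D u = 0) = Finset.univ.image c := by
      ext u; simp [h4]
    rw [this, Finset.sum_image (fun a _ b _ h => hinj h)]
    simp only [h3, Finset.sum_sub_distrib]
    rw [sub_eq_zero]
    exact Equiv.sum_comp (Equiv.addRight (1 : Fin l)) (fun i => eres G x (c i))
  have hc0 : (Finset.univ.filter (fun u => D u = 0)).card = l := by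
    have : Finset.univ.filter (fun u => D u = 0) = Finset.univ.image c := by
      ext u; simp [h4]
    rw [this, Finset.card_image_of_injective _ hinj]; simp
  have hc1 : (Finset.univ.filter (fun u => ¬ D u = 0)).card + l = n := by
    have := Finset.card_filter_add_card_filter_not (s := (Finset.univ : Finset V)) (fun u => D u = 0)
    rw [hc0, Finset.card_univ, hn] at this
    omega
  have hc2 : ((Finset.univ.filter (fun u => ¬ D u = 0)).filter (fun u => ∃ m, p^[m] x = u)).card
      = D x := by
    have : (Finset.univ.filter (fun u => ¬ D u = 0)).filter (fun u => ∃ m, p^[m] x = u) =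
        (Finset.range (D x)).image (fun m => p^[m] x) := by
      ext u
      simp only [Finset.mem_filter, Finset.mem_univ, true_and, Finset.mem_image, Finset.mem_range]
      constructor
      · rintro ⟨h, m, rfl⟩
        rw [hDit] at h
        exact ⟨m, by omega, rfl⟩
      · rintro ⟨m, hm, rfl⟩
        rw [hDit]
        exact ⟨by omega, m, rfl⟩
    rw [this, Finset.card_image_of_injOn, Finset.card_range]
    intro a ha b hb hab
    have := congrArg D hab
    simp only [hDit] at this
    simp only [Finset.coe_range, Set.mem_Iio] at ha hb
    omega
  have hnc : ∑ u ∈ Finset.univ.filter (fun u => ¬ D u = 0), (eres G x (p u) - eres G x u)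
      = 2 * (D x : ℝ) - (n - l) := by
    rw [Finset.sum_congr rfl (fun u hu => hbr u (Finset.mem_filter.1 hu).2)]
    have e : ∀ u, (if (∃ m, p^[m] x = u) then (1:ℝ) else -1) =
        2 * (if (∃ m, p^[m] x = u) then (1:ℝ) else 0) - 1 := by
      intro u; split_ifs <;> norm_num
    simp only [e, Finset.sum_sub_distrib, ← Finset.mul_sum]
    rw [Finset.sum_boole, hc2, ← hc1]
    simp
  have htot := Finset.sum_filter_add_sum_filter_not (Finset.univ : Finset V) (fun u => D u = 0)
    (fun u => eres G x (p u) - eres G x u)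
  rw [hcyc, hnc, Finset.sum_sub_distrib] at htot
  rw [hRw, Finset.sum_add_distrib, hdist, Rres]
  linarith
end

section
/- Let G be an n-vertex unicyclic graph with unique cycle C_l = v_1…v_l and branches T_1,…,T_l, and let x ∈ V(T_k). Then the reverse cover cost satisfies RC(x) = 2n·R(x) − 2·Kf(G) − Σ_{i=1}^{l} D_{T_i}(v_i) + n·d(x, v_k), where RC(x) = Σ_{y∈V(G)} H_{yx}. -/
open SimpleGraph Finset

attribute [local instance] Classical.propDecidable

variable {V : Type*}

namespace RCaux

/-- graph Laplacian -/
noncomputable def lap [Fintype V] (G : SimpleGraph V) (φ : V → ℝ) (u : V) : ℝ :=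
  ∑ w, if G.Adj u w then φ u - φ w else 0

theorem green [Fintype V] (G : SimpleGraph V) (φ ψ : V → ℝ) :
    ∑ u, φ u * lap G ψ u =
      (1/2) * ∑ u, ∑ v, if G.Adj u v then (φ u - φ v) * (ψ u - ψ v) else 0 := by
  have h1 : ∑ u, φ u * lap G ψ u =
      ∑ u, ∑ v, if G.Adj u v then φ u * (ψ u - ψ v) else 0 := by
    refine Finset.sum_congr rfl fun u _ => ?_
    rw [lap, Finset.mul_sum]
    refine Finset.sum_congr rfl fun v _ => ?_
    split_ifs <;> simp
  have h2 : ∑ u, φ u * lap G ψ u =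
      ∑ u, ∑ v, if G.Adj u v then φ v * (ψ v - ψ u) else 0 := by
    rw [h1, Finset.sum_comm]
    refine Finset.sum_congr rfl fun u _ => Finset.sum_congr rfl fun v _ => ?_
    simp only [G.adj_comm]
  have h3 : ∑ u, ∑ v, (if G.Adj u v then (φ u - φ v) * (ψ u - ψ v) else 0)
      = ∑ u, φ u * lap G ψ u + ∑ u, φ u * lap G ψ u := by
    conv_rhs => rw [h1]
    conv_rhs => arg 2; rw [← h1, h2]
    rw [← Finset.sum_add_distrib]
    refine Finset.sum_congr rfl fun u _ => ?_
    rw [← Finset.sum_add_distrib]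
    refine Finset.sum_congr rfl fun v _ => ?_
    split_ifs
    · ring
    · simp
  rw [h3]; ring

theorem green_symm [Fintype V] (G : SimpleGraph V) (φ ψ : V → ℝ) :
    ∑ u, φ u * lap G ψ u = ∑ u, ψ u * lap G φ u := by
  rw [green, green]
  simp only [mul_comm]

theorem energy_eq [Fintype V] (G : SimpleGraph V) (φ : V → ℝ) :
    energyFn G φ = ∑ u, φ u * lap G φ u := by
  rw [green, energyFn]
  simp only [sq]

theorem energy_nonneg [Fintype V] (G : SimpleGraph V) (φ : V → ℝ) : 0 ≤ energyFn G φ := by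
  unfold energyFn
  refine mul_nonneg (by norm_num) (Finset.sum_nonneg fun u _ => Finset.sum_nonneg fun v _ => ?_)
  split_ifs
  · positivity
  · exact le_rfl

theorem lap_const [Fintype V] (G : SimpleGraph V) (a : ℝ) (u : V) :
    lap G (fun _ => a) u = 0 := by simp [lap]

theorem lap_comb [Fintype V] (G : SimpleGraph V) (φ ψ : V → ℝ) (a b : ℝ) (u : V) :
    lap G (fun v => a * φ v + b * ψ v) u = a * lap G φ u + b * lap G ψ u := by
  simp only [lap, Finset.mul_sum, ← Finset.sum_add_distrib]
  refine Finset.sum_congr rfl fun v _ => ?_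
  split_ifs
  · ring
  · simp

theorem sum_lap [Fintype V] (G : SimpleGraph V) (φ : V → ℝ) : ∑ u, lap G φ u = 0 := by
  have := green_symm G (fun _ => 1) φ
  simpa [lap_const] using this

theorem energy_zero [Fintype V] (G : SimpleGraph V) (hc : G.Connected) (φ : V → ℝ)
    (h : energyFn G φ = 0) (u v : V) : φ u = φ v := by
  have hadj : ∀ a b, G.Adj a b → φ a = φ b := by
    intro a b hab
    have h0 : ∀ a ∈ Finset.univ, 0 ≤ ∑ v, if G.Adj a v then (φ a - φ v)^2 else 0 :=
      fun a _ => Finset.sum_nonneg fun v _ => by split_ifs; positivity; exact le_rfl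
    have h1 : ∑ u, ∑ v, (if G.Adj u v then (φ u - φ v)^2 else 0) = 0 := by
      unfold energyFn at h; linarith
    have h2 := (Finset.sum_eq_zero_iff_of_nonneg h0).1 h1 a (Finset.mem_univ _)
    have h3 := (Finset.sum_eq_zero_iff_of_nonneg
      (fun v _ => by split_ifs; positivity; exact le_rfl)).1 h2 b (Finset.mem_univ _)
    rw [if_pos hab] at h3
    have := pow_eq_zero_iff (two_ne_zero) |>.1 h3
    linarith
  obtain ⟨p⟩ := hc.preconnected u v
  induction p with
  | nil => rfl
  | cons hab _ ih => exact (hadj _ _ hab).trans ih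

theorem exists_green [Fintype V] (G : SimpleGraph V) (hc : G.Connected) (x : V) :
    ∃ g : V → ℝ, (∑ u, g u = 0) ∧
      ∀ u, lap G g u = (if u = x then 1 else 0) - 1 / (Fintype.card V : ℝ) := by
  have hn : (0:ℝ) < Fintype.card V := by
    have : Nonempty V := ⟨x⟩
    exact_mod_cast Fintype.card_pos
  let A : (V → ℝ) →ₗ[ℝ] (V → ℝ) :=
    { toFun := fun φ u => lap G φ u + ∑ v, φ v
      map_add' := by
        intro φ ψ; funext u
        have := lap_comb G φ ψ 1 1 u
        simp only [one_mul] at this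
        simp only [Pi.add_apply, Finset.sum_add_distrib]
        change lap G (fun v => φ v + ψ v) u + _ = _
        rw [this]; ring
      map_smul' := by
        intro a φ; funext u
        have := lap_comb G φ φ a 0 u
        simp only [zero_mul, add_zero] at this
        simp only [Pi.smul_apply, smul_eq_mul, RingHom.id_apply, ← Finset.mul_sum]
        change lap G (fun v => a * φ v) u + _ = _
        rw [this]; ring }
  have hA : ∀ φ u, A φ u = lap G φ u + ∑ v, φ v := fun _ _ => rfl
  have hsum : ∀ φ, ∑ u, A φ u = Fintype.card V * ∑ v, φ v := by
    intro φ
    simp only [hA, Finset.sum_add_distrib, sum_lap, zero_add, Finset.sum_const, Finset.card_univ,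
      nsmul_eq_mul]
  have hinj : Function.Injective A := by
    rw [← LinearMap.ker_eq_bot, LinearMap.ker_eq_bot']
    intro φ hφ
    have h1 := hsum φ
    rw [hφ] at h1
    simp only [Pi.zero_apply, Finset.sum_const_zero] at h1
    have h2 : ∑ v, φ v = 0 := by
      rcases mul_eq_zero.1 h1.symm with h | h
      · exact absurd h hn.ne'
      · exact h
    have h3 : ∀ u, lap G φ u = 0 := by
      intro u
      have := congrFun hφ u
      rw [hA, h2] at this
      simpa using this
    have h4 : energyFn G φ = 0 := by rw [energy_eq]; simp [h3]
    have h5 := energy_zero G hc φ h4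
    funext u
    have h6 : ∑ v, φ v = ∑ _v : V, φ u := Finset.sum_congr rfl fun v _ => h5 v u
    rw [h2, Finset.sum_const, Finset.card_univ, nsmul_eq_mul] at h6
    rcases mul_eq_zero.1 h6.symm with h | h
    · exact absurd h hn.ne'
    · exact h
  obtain ⟨g, hg⟩ := (LinearMap.injective_iff_surjective.1 hinj)
    (fun u => (if u = x then 1 else 0) - 1 / (Fintype.card V : ℝ))
  have h0 : ∑ u, g u = 0 := by
    have h1 := hsum g
    rw [hg] at h1
    simp only [Finset.sum_sub_distrib, Finset.sum_ite_eq', Finset.mem_univ, if_true,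
      Finset.sum_const, Finset.card_univ, nsmul_eq_mul] at h1
    rw [mul_one_div_cancel hn.ne', sub_self] at h1
    rcases mul_eq_zero.1 h1.symm with h | h
    · exact absurd h hn.ne'
    · exact h
  refine ⟨g, h0, fun u => ?_⟩
  have := congrFun hg u
  rw [hA, h0, add_zero] at this
  exact this

theorem eres_eq [Fintype V] (G : SimpleGraph V) (x y : V) (hxy : x ≠ y) (ψ : V → ℝ)
    (hψ : ∀ u, lap G ψ u = (if u = x then 1 else 0) - (if u = y then 1 else 0)) :
    eres G x y = ψ x - ψ y := by
  have hpair : ∀ φ : V → ℝ, ∑ u, φ u * lap G ψ u = φ x - φ y := by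
    intro φ
    simp [hψ, mul_sub, Finset.sum_sub_distrib]
  have hE : energyFn G ψ = ψ x - ψ y := by rw [energy_eq, hpair]
  set r := ψ x - ψ y with hr
  have hexp : ∀ (φ : V → ℝ) (t : ℝ), energyFn G (fun v => 1 * φ v + t * ψ v)
      = energyFn G φ + 2 * t * (φ x - φ y) + t^2 * r := by
    intro φ t
    rw [← hE, energy_eq, energy_eq, energy_eq]
    have e1 : ∑ u, (1 * φ u + t * ψ u) * lap G (fun v => 1 * φ v + t * ψ v) u
      = ∑ u, φ u * lap G φ u + t * ∑ u, φ u * lap G ψ u + t * ∑ u, ψ u * lap G φ u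
        + t^2 * ∑ u, ψ u * lap G ψ u := by
      simp only [lap_comb, Finset.mul_sum, ← Finset.sum_add_distrib]
      exact Finset.sum_congr rfl fun u _ => by ring
    rw [e1, green_symm G ψ φ, hpair φ]
    ring
  have hr0 : 0 ≤ r := hE ▸ energy_nonneg G ψ
  have hrpos : 0 < r := by
    rcases hr0.lt_or_eq with h | h
    · exact h
    · exfalso
      let φ : V → ℝ := fun v => if v = x then 1 else 0
      have h1 := hexp φ (-(energyFn G φ + 1))
      have h2 := energy_nonneg G (fun v => 1 * φ v + (-(energyFn G φ + 1)) * ψ v)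
      have h3 := energy_nonneg G φ
      have h4 : φ x - φ y = 1 := by simp [φ, hxy.symm]
      rw [h1, ← h, h4] at h2
      linarith
  have hleast : IsLeast {e : ℝ | ∃ φ : V → ℝ, φ x = 1 ∧ φ y = 0 ∧ e = energyFn G φ} r⁻¹ := by
    constructor
    · refine ⟨fun v => 1 * (-(ψ y) / r) + r⁻¹ * ψ v, ?_, ?_, ?_⟩
      · field_simp; rw [hr]; ring
      · field_simp; ring
      · have h1 := hexp (fun _ => -(ψ y) / r) r⁻¹
        rw [h1]
        have : energyFn G (fun _ => -(ψ y) / r) = 0 := by simp [energyFn]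
        rw [this]; field_simp; ring
    · rintro e ⟨φ, h1, h0, rfl⟩
      have h2 := energy_nonneg G (fun v => 1 * φ v + (-r⁻¹) * ψ v)
      rw [hexp, h1, h0] at h2
      have h3 : (-r⁻¹)^2 * r = r⁻¹ := by field_simp
      linarith
  rw [eres, hleast.csInf_eq, inv_inv]

theorem eres_self [Fintype V] (G : SimpleGraph V) (x : V) : eres G x x = 0 := by
  have : {e : ℝ | ∃ φ : V → ℝ, φ x = 1 ∧ φ x = 0 ∧ e = energyFn G φ} = ∅ := by
    ext e; simp only [Set.mem_ofPred_eq, Set.mem_empty_iff_false, iff_false]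
    rintro ⟨φ, h1, h0, _⟩
    rw [h1] at h0; exact one_ne_zero h0
  rw [eres, this, Real.sInf_empty, inv_zero]

theorem sum_hit [Fintype V] (G : SimpleGraph V) (x u : V) (f : V → ℝ) :
    ∑ v, hitMat G x u v * f v = (degR G u)⁻¹ * ∑ v, if G.Adj u v ∧ v ≠ x then f v else 0 := by
  rw [Finset.mul_sum]
  refine Finset.sum_congr rfl fun v _ => ?_
  simp only [hitMat, Matrix.of_apply]
  split_ifs <;> simp_all

theorem lap_eq [Fintype V] (G : SimpleGraph V) (h : V → ℝ) (u : V) :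
    lap G h u = degR G u * h u - ∑ w, if G.Adj u w then h w else 0 := by
  rw [degR, lap]
  rw [← nsmul_eq_mul, ← Finset.sum_const, Finset.sum_filter, ← Finset.sum_sub_distrib]
  refine Finset.sum_congr rfl fun v _ => ?_
  split_ifs <;> simp

theorem hitting_eq [Fintype V] (G : SimpleGraph V) (hdeg : ∀ u, 0 < degR G u) (x : V)
    (h : V → ℝ) (hx : h x = 0) (hh : ∀ u, u ≠ x → lap G h u = degR G u) (y : V) :
    hitting G y x = h y := by
  unfold hitting
  split_ifs with hyx
  · rw [hyx, hx]
  have hnn : ∀ u, 0 ≤ h u := by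
    have : Nonempty V := ⟨x⟩
    obtain ⟨u0, hu0⟩ := Finite.exists_min h
    by_cases hu : u0 = x
    · intro u; rw [← hx, ← hu]; exact hu0 u
    · exfalso
      have h1 := hh u0 hu
      have h2 : lap G h u0 ≤ 0 := by
        refine Finset.sum_nonpos fun w _ => ?_
        split_ifs
        · linarith [hu0 w]
        · exact le_rfl
      linarith [hdeg u0]
  set Q := hitMat G x with hQ
  have hQ0 : ∀ u v, 0 ≤ Q u v := by
    intro u v
    simp only [hQ, hitMat, Matrix.of_apply]
    split_ifs
    · exact le_rfl
    · exact inv_nonneg.2 (hdeg u).le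
    · exact le_rfl
  have hQk : ∀ k u v, 0 ≤ (Q ^ k) u v := by
    intro k
    induction k with
    | zero => intro u v; rw [pow_zero, Matrix.one_apply]; split_ifs <;> norm_num
    | succ k ih =>
      intro u v
      rw [pow_succ, Matrix.mul_apply]
      exact Finset.sum_nonneg fun w _ => mul_nonneg (ih _ _) (hQ0 _ _)
  let g : V → ℝ := fun u => 1 + ∑ v, Q u v * h v
  have hg0 : ∀ u, 0 ≤ g u := fun u => by
    have : 0 ≤ ∑ v, Q u v * h v := Finset.sum_nonneg fun v _ => mul_nonneg (hQ0 _ _) (hnn _)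
    change 0 ≤ 1 + _
    linarith
  have hgh : ∀ u, u ≠ x → g u = h u := by
    intro u hu
    change 1 + ∑ v, Q u v * h v = h u
    rw [hQ, sum_hit]
    have h1 := hh u hu
    rw [lap_eq] at h1
    have h2 : ∑ v, (if G.Adj u v ∧ v ≠ x then h v else 0) = ∑ w, if G.Adj u w then h w else 0 := by
      refine Finset.sum_congr rfl fun v _ => ?_
      by_cases hv : v = x
      · subst hv; simp [hx]
      · simp [hv]
    rw [h2]
    have h3 := hdeg u
    have : (∑ w, if G.Adj u w then h w else 0) = degR G u * h u - degR G u := by linarith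
    rw [this]; field_simp; ring
  have hgQ : ∀ u, g u = 1 + ∑ v, Q u v * g v := by
    intro u
    change 1 + ∑ v, Q u v * h v = _
    congr 1
    refine Finset.sum_congr rfl fun v _ => ?_
    by_cases hv : v = x
    · have : Q u v = 0 := by simp [hQ, hitMat, hv]
      rw [this]; simp
    · rw [hgh v hv]
  have hstep : ∀ k u, ∑ z, (Q^k) u z * g z = ∑ z, (Q^k) u z + ∑ z, (Q^(k+1)) u z * g z := by
    intro k u
    have e1 : ∑ z, (Q^(k+1)) u z * g z = ∑ z, (Q^k) u z * ∑ v, Q z v * g v := by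
      simp only [pow_succ, Matrix.mul_apply, Finset.sum_mul, Finset.mul_sum]
      rw [Finset.sum_comm]
      simp only [mul_assoc]
    rw [e1, ← Finset.sum_add_distrib]
    refine Finset.sum_congr rfl fun z _ => ?_
    conv_lhs => rw [hgQ z]
    ring
  have hpart : ∀ N, ∑ k ∈ Finset.range N, ∑ z, (Q^k) y z = g y - ∑ z, (Q^N) y z * g z := by
    intro N
    induction N with
    | zero => simp [Matrix.one_apply]
    | succ N ih => rw [Finset.sum_range_succ, ih, hstep N y]; ring
  have hs0 : ∀ k, 0 ≤ ∑ z, (Q^k) y z := fun k => Finset.sum_nonneg fun z _ => hQk _ _ _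
  have hsum : Summable fun k => ∑ z, (Q^k) y z := by
    refine summable_of_sum_range_le (c := g y) hs0 fun N => ?_
    rw [hpart]
    have : 0 ≤ ∑ z, (Q^N) y z * g z :=
      Finset.sum_nonneg fun z _ => mul_nonneg (hQk _ _ _) (hg0 _)
    linarith
  have ht0 := hsum.tendsto_atTop_zero
  have hzero : Filter.Tendsto (fun N => ∑ z, (Q^N) y z * g z) Filter.atTop (nhds 0) := by
    have hb : Filter.Tendsto (fun N => (∑ z, (Q^N) y z) * ∑ w, g w) Filter.atTop (nhds 0) := by
      simpa using ht0.mul_const (∑ w, g w)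
    refine squeeze_zero (fun N => Finset.sum_nonneg fun z _ => mul_nonneg (hQk _ _ _) (hg0 _))
      (fun N => ?_) hb
    rw [Finset.sum_mul]
    refine Finset.sum_le_sum fun z _ => mul_le_mul_of_nonneg_left ?_ (hQk _ _ _)
    exact Finset.single_le_sum (fun w _ => hg0 w) (Finset.mem_univ z)
  have hlim := hsum.hasSum.tendsto_sum_nat
  have hlim2 : Filter.Tendsto (fun N => ∑ k ∈ Finset.range N, ∑ z, (Q^k) y z)
      Filter.atTop (nhds (g y - 0)) := by
    simp only [hpart]
    exact tendsto_const_nhds.sub hzero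
  rw [tendsto_nhds_unique hlim hlim2, sub_zero, hgh y hyx]

/-- Analytic part: a function with Laplacian `2 - deg` determines the reverse cover cost. -/
theorem analytic [Fintype V] (G : SimpleGraph V) (hc : G.Connected)
    (hdeg : ∀ u, 0 < degR G u) (D : V → ℝ) (hD : ∀ u, lap G D u = 2 - degR G u) (x : V) :
    reverseCoverCost G x = 2 * (Fintype.card V : ℝ) * Rres G x - 2 * Kf G
      - ∑ u, D u + (Fintype.card V : ℝ) * D x := by
  choose g hg0 hg using exists_green G hc
  set n : ℝ := (Fintype.card V : ℝ) with hn'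
  have hn : (0:ℝ) < n := by
    have : Nonempty V := ⟨x⟩
    rw [hn']; exact_mod_cast Fintype.card_pos
  have hsymm : ∀ a b, g a b = g b a := by
    intro a b
    have := green_symm G (g a) (g b)
    simpa [hg, mul_sub, Finset.sum_sub_distrib, ← Finset.sum_mul, hg0] using this
  have hr : ∀ a b, eres G a b = g a a + g b b - 2 * g a b := by
    intro a b
    by_cases hab : a = b
    · subst hab; rw [eres_self]; ring
    · rw [eres_eq G a b hab (fun v => 1 * g a v + (-1) * g b v)]
      · rw [hsymm b a]; ring
      · intro u; rw [lap_comb, hg, hg]; ring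
  have hR : ∀ a, Rres G a = n * g a a + ∑ b, g b b := by
    intro a
    simp only [Rres, hr, Finset.sum_sub_distrib, Finset.sum_add_distrib, ← Finset.mul_sum, hg0,
      Finset.sum_const, Finset.card_univ, nsmul_eq_mul, mul_zero, sub_zero]
    rfl
  have hK : Kf G = n * ∑ b, g b b := by
    have : Kf G = (1/2) * ∑ a, Rres G a := rfl
    rw [this]
    simp only [hR, Finset.sum_add_distrib, ← Finset.mul_sum, Finset.sum_const, Finset.card_univ,
      nsmul_eq_mul]
    rw [← hn']; ring
  have hH : ∀ y, hitting G y x = (D x - D y) + 2 * n * (g x x - g x y) := by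
    intro y
    refine hitting_eq G hdeg x (fun y => (D x - D y) + 2 * n * (g x x - g x y)) (by simp) ?_ y
    intro u hu
    have e : lap G (fun y => (D x - D y) + 2 * n * (g x x - g x y)) u
        = -1 * lap G D u + (-(2 * n)) * lap G (g x) u := by
      rw [← lap_comb]
      unfold lap
      refine Finset.sum_congr rfl fun w _ => ?_
      split_ifs
      · ring
      · rfl
    rw [e, hD, hg, if_neg hu]
    field_simp; ring
  rw [reverseCoverCost]
  simp only [hH, Finset.sum_add_distrib, Finset.sum_sub_distrib, ← Finset.mul_sum, hg0,
    Finset.sum_const, Finset.card_univ, nsmul_eq_mul]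
  rw [hR, hK, ← hn']; ring

theorem comb [Fintype V] (G : SimpleGraph V) (l : ℕ) [NeZero l]
    (hconn : G.Connected) (huni : esize G = Fintype.card V)
    (hl : 3 ≤ l) (c : Fin l → V) (hinj : Function.Injective c)
    (hadj : ∀ i : Fin l, G.Adj (c i) (c (i + 1))) :
    ∃ D : V → ℕ, (∀ u, 0 < degR G u) ∧ (∀ u, lap G (fun v => (D v : ℝ)) u = 2 - degR G u) ∧
      (∀ k x, (G.deleteEdges (cycleEdges c)).Reachable (c k) x → G.dist x (c k) = D x) ∧
      (∑ i : Fin l, branchD (G.deleteEdges (cycleEdges c)) (c i)) = ∑ u, (D u : ℝ) := by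
  have hmin : ∀ y, ∃ i, ∀ j, G.dist y (c i) ≤ G.dist y (c j) := fun y =>
    Finite.exists_min fun i => G.dist y (c i)
  choose ri hri using hmin
  let D : V → ℕ := fun y => G.dist y (c (ri y))
  have hDle : ∀ y i, D y ≤ G.dist y (c i) := hri
  have hDc : ∀ i, D (c i) = 0 := by
    intro i
    have := hDle (c i) i
    rw [SimpleGraph.dist_self] at this; omega
  have hD0 : ∀ y, D y = 0 → ∃ i, y = c i := by
    intro y hy
    exact ⟨ri y, (hconn.dist_eq_zero_iff).1 hy⟩
  have hDadj : ∀ y w, G.Adj y w → D y ≤ D w + 1 := by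
    intro y w h
    have h1 := hDle y (ri w)
    have h2 := hconn.dist_triangle (u := y) (v := w) (w := c (ri w))
    have h3 : G.dist y w = 1 := SimpleGraph.dist_eq_one_iff_adj.2 h
    change D y ≤ G.dist w (c (ri w)) + 1
    omega
  have hpar : ∀ y, D y ≠ 0 → ∃ w, G.Adj y w ∧ D w + 1 = D y := by
    intro y hy
    obtain ⟨p, hp⟩ := hconn.exists_walk_length_eq_dist y (c (ri y))
    have hp' : p.length = D y := hp
    have haux : ∀ z (p : G.Walk y z), p.length ≠ 0 →
        ∃ w, G.Adj y w ∧ ∃ q : G.Walk w z, q.length + 1 = p.length := by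
      intro z p hp
      cases p with
      | nil => simp at hp
      | cons h q => exact ⟨_, h, q, by simp⟩
    obtain ⟨w, h, q, hq⟩ := haux _ p (by omega)
    refine ⟨w, h, ?_⟩
    have h1 := hDle w (ri y)
    have h2 := SimpleGraph.dist_le q
    have h3 := hDadj _ _ h
    omega
  have hpex : ∀ y, ∃ w, G.Adj y w ∧ (D y ≠ 0 → D w + 1 = D y) ∧ (∀ i, y = c i → w = c (i+1)) := by
    intro y
    by_cases hy : D y = 0
    · obtain ⟨i, rfl⟩ := hD0 y hy
      exact ⟨c (i+1), hadj i, fun h => absurd hy h, fun j hj => by rw [hinj hj]⟩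
    · obtain ⟨w, hw, hw'⟩ := hpar y hy
      refine ⟨w, hw, fun _ => hw', ?_⟩
      rintro i rfl
      exact absurd (hDc i) hy
  choose p hpadj hpD hpc using hpex
  have hpc' : ∀ i, p (c i) = c (i+1) := fun i => hpc _ i rfl
  have hp0 : ∀ y, D y = 0 → D (p y) = 0 := by
    intro y hy
    obtain ⟨i, rfl⟩ := hD0 y hy
    rw [hpc', hDc]
  have h2ne : ∀ i : Fin l, i + 1 + 1 ≠ i := by
    intro i h
    have := congrArg Fin.val h
    have hi := i.isLt
    have h1 : (1 : Fin l).val = 1 := by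
      rw [Fin.val_one']; exact Nat.mod_eq_of_lt (by omega)
    rw [Fin.val_add, Fin.val_add, h1] at this
    by_cases hc1 : i.val + 1 < l
    · rw [Nat.mod_eq_of_lt hc1] at this
      by_cases hc2 : i.val + 1 + 1 < l
      · rw [Nat.mod_eq_of_lt hc2] at this; omega
      · have : i.val + 1 + 1 = l := by omega
        simp_all
        omega
    · have h5 : i.val + 1 = l := by omega
      rw [h5, Nat.mod_self, zero_add, Nat.mod_eq_of_lt (by omega)] at this
      omega
  let f : V → G.edgeSet := fun y => ⟨s(y, p y), hpadj y⟩
  have hfinj : Function.Injective f := by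
    intro y z hyz
    have h1 : s(y, p y) = s(z, p z) := congrArg Subtype.val hyz
    rw [Sym2.eq_iff] at h1
    rcases h1 with h1 | ⟨h1, h2⟩
    · exact h1.1
    · exfalso
      have ay := hpD y
      have az := hpD z
      have by0 := hp0 y
      have bz0 := hp0 z
      rw [← h1] at az bz0
      rw [h2] at ay by0
      by_cases hy : D y = 0
      · obtain ⟨i, hi⟩ := hD0 y hy
        have hz : z = c (i+1) := by rw [← h2, hi, hpc']
        have : y = c (i+1+1) := by rw [h1, hz, hpc']
        exact h2ne i (hinj (this.symm.trans hi))
      · have := ay hy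
        by_cases hz : D z = 0
        · exact hy (bz0 hz)
        · have := az hz
          omega
  have hfsurj : Function.Surjective f := by
    have : Finite G.edgeSet := inferInstance
    refine ((Nat.bijective_iff_injective_and_card f).2 ⟨hfinj, ?_⟩).2
    rw [Nat.card_eq_fintype_card (α := V)]
    exact huni.symm
  have hedge : ∀ u w, G.Adj u w → w = p u ∨ u = p w := by
    intro u w h
    obtain ⟨y, hy⟩ := hfsurj ⟨s(u, w), h⟩
    have h1 : s(y, p y) = s(u, w) := congrArg Subtype.val hy
    rw [Sym2.eq_iff] at h1
    rcases h1 with ⟨rfl, h2⟩ | ⟨rfl, h2⟩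
    · exact Or.inl h2.symm
    · exact Or.inr h2.symm
  have hG'adj : ∀ u w, (G.deleteEdges (cycleEdges c)).Adj u w →
      (D u ≠ 0 ∧ w = p u) ∨ (D w ≠ 0 ∧ u = p w) := by
    have key : ∀ u, D u = 0 → s(u, p u) ∈ cycleEdges c := by
      intro u hu
      obtain ⟨i, rfl⟩ := hD0 u hu
      exact ⟨i, by simp only [hpc']⟩
    intro u w h
    rw [SimpleGraph.deleteEdges_adj] at h
    rcases hedge u w h.1 with h1 | h1
    · refine Or.inl ⟨fun h0 => h.2 ?_, h1⟩
      rw [h1]; exact key u h0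
    · refine Or.inr ⟨fun h0 => h.2 ?_, h1⟩
      rw [h1, Sym2.eq_swap]; exact key w h0
  have hG'p : ∀ u, D u ≠ 0 → (G.deleteEdges (cycleEdges c)).Adj u (p u) := by
    intro u hu
    rw [SimpleGraph.deleteEdges_adj]
    refine ⟨hpadj u, ?_⟩
    rintro ⟨i, hi⟩
    have : u = c i ∨ u = c (i+1) := by
      have : u ∈ s(c i, c (i+1)) := by
        have h2 : s(c i, c (i+1)) = s(u, p u) := hi
        rw [h2]; simp
      simpa using this
    rcases this with h | h <;> exact hu (h ▸ hDc _)
  -- root function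
  let ρ : V → V := fun y => p^[D y] y
  have hρp : ∀ y, D y ≠ 0 → ρ (p y) = ρ y := by
    intro y hy
    change p^[D (p y)] (p y) = p^[D y] y
    rw [← hpD y hy, Function.iterate_succ_apply]
  have hρc : ∀ i, ρ (c i) = c i := by
    intro i
    change p^[D (c i)] (c i) = c i
    rw [hDc]; rfl
  have hρreach : ∀ u w, (G.deleteEdges (cycleEdges c)).Reachable u w → ρ u = ρ w := by
    rintro u w ⟨q⟩
    induction q with
    | nil => rfl
    | cons h _ ih =>
      rw [← ih]
      rcases hG'adj _ _ h with ⟨h1, h2⟩ | ⟨h1, h2⟩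
      · rw [h2, hρp _ h1]
      · rw [h2, hρp _ h1]
  have hwalk : ∀ m y, D y = m →
      (∃ i, ρ y = c i) ∧ ∃ q : (G.deleteEdges (cycleEdges c)).Walk y (ρ y), q.length = m := by
    intro m
    induction m with
    | zero =>
      intro y hy
      obtain ⟨i, rfl⟩ := hD0 y hy
      rw [hρc]
      exact ⟨⟨i, rfl⟩, SimpleGraph.Walk.nil, rfl⟩
    | succ m ih =>
      intro y hy
      have hy0 : D y ≠ 0 := by omega
      have h1 := hpD y hy0
      obtain ⟨hi, q, hq⟩ := ih (p y) (by omega)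
      rw [hρp y hy0] at hi q
      obtain ⟨_, q, hq⟩ := ih (p y) (by omega)
      refine ⟨hi, ?_⟩
      rw [← hρp y hy0]
      exact ⟨SimpleGraph.Walk.cons (hG'p y hy0) q, by simp [hq]⟩
  have hroot : ∀ k x, (G.deleteEdges (cycleEdges c)).Reachable (c k) x ↔ ρ x = c k := by
    intro k x
    constructor
    · intro h; rw [← hρreach _ _ h, hρc]
    · intro h
      obtain ⟨_, q, _⟩ := hwalk _ x rfl
      rw [← h]; exact ⟨q.reverse⟩
  have hle : G.deleteEdges (cycleEdges c) ≤ G := SimpleGraph.deleteEdges_le _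
  have hdist' : ∀ k x, ρ x = c k → (G.deleteEdges (cycleEdges c)).dist (c k) x = D x := by
    intro k x h
    obtain ⟨_, q, hq⟩ := hwalk _ x rfl
    rw [h] at q
    obtain ⟨_, q, hq⟩ := hwalk _ x rfl
    apply le_antisymm
    · rw [← h, SimpleGraph.dist_comm, ← hq]; exact SimpleGraph.dist_le q
    · have hr := (hroot k x).2 h
      obtain ⟨q', hq'⟩ := hr.exists_walk_length_eq_dist
      have h1 := SimpleGraph.dist_le (q'.mapLe hle)
      have h2 := hDle x k
      rw [SimpleGraph.dist_comm] at h2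
      rw [← hq']
      simp only [SimpleGraph.Walk.length_map, SimpleGraph.Walk.mapLe] at h1
      omega
  refine ⟨D, ?_, ?_, ?_, ?_⟩
  · intro u
    unfold degR
    exact_mod_cast Finset.card_pos.2 ⟨p u, by simp [hpadj u]⟩
  · intro u
    have hdeg : degR G u = ∑ w, if G.Adj u w then (1:ℝ) else 0 := by
      rw [degR, Finset.card_filter]; push_cast; rfl
    suffices h : ∑ w, (if G.Adj u w then (D u : ℝ) - D w + 1 else 0) = 2 by
      have h2 : ∑ w, (if G.Adj u w then (D u : ℝ) - D w + 1 else 0)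
          = lap G (fun v => (D v : ℝ)) u + degR G u := by
        rw [hdeg, lap, ← Finset.sum_add_distrib]
        refine Finset.sum_congr rfl fun w _ => ?_
        split_ifs <;> simp
      linarith
    by_cases hu : D u = 0
    · obtain ⟨i, rfl⟩ := hD0 u hu
      have hs : i - 1 + 1 = i := sub_add_cancel i 1
      have hne : c (i+1) ≠ c (i-1) := by
        intro h
        have := hinj h
        have h3 := h2ne (i-1)
        rw [hs] at h3
        exact h3 this
      have hterm : ∀ w, (if G.Adj (c i) w then (D (c i) : ℝ) - D w + 1 else 0)
          = (if w = c (i+1) then 1 else 0) + (if w = c (i-1) then 1 else 0) := by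
        intro w
        by_cases h1 : w = c (i+1)
        · subst h1
          rw [if_pos (hadj i), hDc, hDc, if_pos rfl, if_neg hne]; simp
        · by_cases h2 : w = c (i-1)
          · subst h2
            have := hadj (i-1)
            rw [hs] at this
            rw [if_pos this.symm, hDc, hDc, if_neg h1, if_pos rfl]; simp
          · rw [if_neg h1, if_neg h2]
            split_ifs with ha
            · rcases hedge _ _ ha with h3 | h3
              · rw [hpc'] at h3; exact absurd h3 h1
              · by_cases hw : D w = 0
                · obtain ⟨j, rfl⟩ := hD0 w hw
                  rw [hpc'] at h3
                  have := hinj h3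
                  exact absurd (by rw [this, add_sub_cancel_right]) h2
                · have h4 := hpD w hw
                  rw [← h3] at h4
                  rw [← h4]; push_cast; ring
            · simp
      rw [Finset.sum_congr rfl fun w _ => hterm w, Finset.sum_add_distrib]
      simp; norm_num
    · have hterm : ∀ w, (if G.Adj u w then (D u : ℝ) - D w + 1 else 0)
          = if w = p u then 2 else 0 := by
        intro w
        by_cases h1 : w = p u
        · subst h1
          rw [if_pos (hpadj u), if_pos rfl, ← hpD u hu]; push_cast; ring
        · rw [if_neg h1]
          split_ifs with ha
          · rcases hedge _ _ ha with h3 | h3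
            · exact absurd h3 h1
            · have hw : D w ≠ 0 := fun h0 => hu (by rw [h3]; exact hp0 w h0)
              have h4 := hpD w hw
              rw [← h3] at h4
              rw [← h4]; push_cast; ring
          · rfl
      rw [Finset.sum_congr rfl fun w _ => hterm w]
      simp
  · intro k x hx
    have h := (hroot k x).1 hx
    apply le_antisymm
    · obtain ⟨_, q, hq⟩ := hwalk _ x rfl
      have h1 := SimpleGraph.dist_le (q.mapLe hle)
      simp only [SimpleGraph.Walk.length_map, SimpleGraph.Walk.mapLe] at h1
      rw [← h]; omega
    · exact hDle x k
  · unfold branchD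
    rw [Finset.sum_comm]
    refine Finset.sum_congr rfl fun u _ => ?_
    obtain ⟨⟨i, hi⟩, _⟩ := hwalk _ u rfl
    rw [Finset.sum_eq_single i]
    · rw [if_pos ((hroot i u).2 hi), hdist' i u hi]
    · intro j _ hj
      rw [if_neg]
      intro h
      rw [hroot, hi] at h
      exact hj (hinj h.symm)
    · simp

end RCaux

/-- For an `n`-vertex unicyclic graph `G` with `x ∈ V(T_k)`,
`RC(x) = 2n·R(x) − 2·Kf(G) − Σ_{i=1}^{l} D_{T_i}(v_i) + n·d(x,v_k)`. -/
theorem reverseCoverCost_formula [Fintype V] (G : SimpleGraph V) (n l : ℕ) [NeZero l]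
    (hn : Fintype.card V = n) (hconn : G.Connected) (huni : esize G = n)
    (hl : 3 ≤ l) (c : Fin l → V) (hinj : Function.Injective c)
    (hadj : ∀ i : Fin l, G.Adj (c i) (c (i + 1)))
    (k : Fin l) (x : V) (hx : (G.deleteEdges (cycleEdges c)).Reachable (c k) x) :
    reverseCoverCost G x = 2 * (n : ℝ) * Rres G x - 2 * Kf G
      - (∑ i : Fin l, branchD (G.deleteEdges (cycleEdges c)) (c i))
      + (n : ℝ) * (G.dist x (c k) : ℝ) := by
  subst hn
  obtain ⟨D, h1, h2, h3, h4⟩ := RCaux.comb G l hconn huni hl c hinj hadj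
  rw [RCaux.analytic G hconn h1 (fun v => (D v : ℝ)) h2 x, h4, h3 k x hx]
end

section
/- Let G be an n-vertex unicyclic graph with unique cycle C_l and branches T_1,…,T_l, and let x ∈ V(T_i), y ∈ V(T_j). Then d(x, v_i) ≤ d(y, v_j) if and only if CC(x) ≥ CC(y). -/
open SimpleGraph Finset

attribute [local instance] Classical.propDecidable

variable {V : Type*}

open Matrix in
lemma hm_mulVec [Fintype V] (G : SimpleGraph V) (hd : ∀ x, 0 < degR G x) (z : V) (v : V → ℝ) (x : V) :
    degR G x * (hitMat G z *ᵥ v) x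
      = ∑ y ∈ Finset.univ.filter (fun y => G.Adj x y), if y = z then 0 else v y := by
  have h := (hd x).ne'
  simp only [Matrix.mulVec, dotProduct, hitMat, Matrix.of_apply, Finset.mul_sum, Finset.sum_filter]
  refine Finset.sum_congr rfl fun y _ => ?_
  split_ifs <;> field_simp <;> simp

open Matrix in
lemma hm_inj [Fintype V] (G : SimpleGraph V) (hconn : G.Connected) (hd : ∀ x, 0 < degR G x) (z : V)
    (v : V → ℝ) (hv : hitMat G z *ᵥ v = v) : v = 0 := by
  obtain ⟨x0, -, hx0⟩ := Finset.exists_max_image Finset.univ (fun x => |v x|) ⟨z, Finset.mem_univ z⟩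
  have hmax : ∀ y, |v y| ≤ |v x0| := fun y => hx0 y (Finset.mem_univ y)
  by_contra hne
  have hM : 0 < |v x0| := by
    by_contra h
    apply hne
    funext y
    have := hmax y
    have h2 := abs_nonneg (v y)
    exact abs_eq_zero.mp (by linarith)
  have step : ∀ x, |v x| = |v x0| → ∀ y, G.Adj x y → y ≠ z ∧ |v y| = |v x0| := by
    intro x hx y hxy
    have h1 := hm_mulVec G hd z v x
    rw [hv] at h1
    have h2 : degR G x * |v x0| ≤ ∑ y ∈ Finset.univ.filter (fun y => G.Adj x y), |if y = z then 0 else v y| := by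
      rw [← hx, ← abs_of_pos (hd x), ← abs_mul, h1]
      exact Finset.abs_sum_le_sum_abs _ _
    have h3 : degR G x * |v x0| = ∑ y ∈ Finset.univ.filter (fun y => G.Adj x y), |v x0| := by
      rw [Finset.sum_const, nsmul_eq_mul]; rfl
    have hle : ∀ y ∈ Finset.univ.filter (fun y => G.Adj x y), |if y = z then 0 else v y| ≤ |v x0| := by
      intro y _
      split_ifs
      · simpa using hM.le
      · exact hmax y
    have h4 : ∑ y ∈ Finset.univ.filter (fun y => G.Adj x y), |if y = z then 0 else v y| = ∑ y ∈ Finset.univ.filter (fun y => G.Adj x y), |v x0| :=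
      le_antisymm (Finset.sum_le_sum hle) (h3 ▸ h2)
    have h5 := (Finset.sum_eq_sum_iff_of_le hle).1 h4 y (by simpa using hxy)
    by_cases hyz : y = z
    · simp [hyz] at h5
      exact absurd h5.symm (by simpa using hM)
    · exact ⟨hyz, by simpa [hyz] using h5⟩
  have all : ∀ y, |v y| = |v x0| := by
    intro y
    obtain ⟨w⟩ := hconn x0 y
    have : ∀ a b (w : G.Walk a b), |v a| = |v x0| → |v b| = |v x0| := by
      intro a b w
      induction w with
      | nil => exact id
      | cons h _ ih => exact fun ha => ih (step _ ha _ h).2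
    exact this _ _ w rfl
  have : (Finset.univ.filter fun y => G.Adj z y).Nonempty := by
    rw [← Finset.card_pos]
    have h := hd z
    unfold degR at h
    exact_mod_cast h
  obtain ⟨y, hy⟩ := this
  have hy : G.Adj z y := by simpa using hy
  exact (step y (all y) z hy.symm).1 rfl

open Matrix in
lemma hm_summable [Fintype V] (G : SimpleGraph V) (hconn : G.Connected) (hd : ∀ x, 0 < degR G x) (z : V) (x : V) :
    Summable (fun k : ℕ => (hitMat G z ^ k *ᵥ (1 : V → ℝ)) x) := by
  have hinj : Function.Injective ((1 - hitMat G z).mulVecLin) := by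
    rw [← LinearMap.ker_eq_bot, LinearMap.ker_eq_bot']
    intro v hv
    apply hm_inj G hconn hd z
    simp only [Matrix.mulVecLin_apply, Matrix.sub_mulVec, Matrix.one_mulVec] at hv
    exact (sub_eq_zero.mp hv).symm
  obtain ⟨u, hu⟩ := LinearMap.injective_iff_surjective.mp hinj 1
  simp only [Matrix.mulVecLin_apply, Matrix.sub_mulVec, Matrix.one_mulVec] at hu
  have hQ : ∀ a b, 0 ≤ hitMat G z a b := by
    intro a b
    simp only [hitMat, Matrix.of_apply]
    split_ifs <;> first | exact le_rfl | exact (inv_pos.mpr (hd a)).le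
  have hu0 : ∀ y, 0 ≤ u y := by
    obtain ⟨x0, -, hx0⟩ := Finset.exists_min_image Finset.univ u ⟨z, Finset.mem_univ z⟩
    intro y
    refine le_trans ?_ (hx0 y (Finset.mem_univ y))
    by_contra hneg
    push Not at hneg
    have h1 := hm_mulVec G hd z u x0
    have h2 : ∑ y ∈ Finset.univ.filter (fun y => G.Adj x0 y), u x0 ≤ ∑ y ∈ Finset.univ.filter (fun y => G.Adj x0 y), if y = z then 0 else u y := by
      refine Finset.sum_le_sum fun y _ => ?_
      split_ifs
      · exact hneg.le
      · exact hx0 y (Finset.mem_univ y)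
    rw [← h1, Finset.sum_const, nsmul_eq_mul] at h2
    have h3 : u x0 ≤ (hitMat G z *ᵥ u) x0 := le_of_mul_le_mul_left h2 (hd x0)
    have h4 := congrFun hu x0
    simp at h4
    linarith
  have hpow : ∀ (k : ℕ) a b, 0 ≤ (hitMat G z ^ k) a b := by
    intro k
    induction k with
    | zero => intro a b; simp only [pow_zero, Matrix.one_apply]; split_ifs <;> simp
    | succ k ih =>
      intro a b
      rw [pow_succ, Matrix.mul_apply]
      exact Finset.sum_nonneg fun c _ => mul_nonneg (ih _ _) (hQ _ _)
  have hb : ∀ N : ℕ, ∀ x, ∑ k ∈ Finset.range N, (hitMat G z ^ k *ᵥ (1 : V → ℝ)) x + (hitMat G z ^ N *ᵥ u) x = u x := by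
    intro N
    induction N with
    | zero => intro x; simp
    | succ N ih =>
      intro x
      rw [Finset.sum_range_succ, ← ih x, ← hu, Matrix.mulVec_sub, Matrix.mulVec_mulVec, ← pow_succ]
      simp only [Pi.sub_apply]
      ring
  refine summable_of_sum_range_le (c := u x) (fun k => ?_) (fun N => ?_)
  · exact Finset.sum_nonneg fun c _ => mul_nonneg (hpow _ _ _) (by simp)
  · have := hb N x
    have h2 : 0 ≤ (hitMat G z ^ N *ᵥ u) x := Finset.sum_nonneg fun c _ => mul_nonneg (hpow _ _ _) (hu0 c)
    linarith

/-- total survival -/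
noncomputable def Ssum [Fintype V] (G : SimpleGraph V) (z x : V) : ℝ := ∑' k : ℕ, ∑ w, (hitMat G z ^ k) x w

open Matrix in
lemma Ssum_eq [Fintype V] (G : SimpleGraph V) (hconn : G.Connected) (hd : ∀ x, 0 < degR G x) (z x : V) :
    degR G x * Ssum G z x = degR G x + ∑ y ∈ Finset.univ.filter (fun y => G.Adj x y), if y = z then 0 else Ssum G z y := by
  have e : ∀ x, Ssum G z x = ∑' k : ℕ, (hitMat G z ^ k *ᵥ (1 : V → ℝ)) x := by
    intro x; simp [Ssum, Matrix.mulVec, dotProduct]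
  have hs := hm_summable G hconn hd z
  have key : Ssum G z x = 1 + (hitMat G z *ᵥ (Ssum G z)) x := by
    rw [e, (hs x).tsum_eq_zero_add]
    congr 1
    · simp
    · simp only [Matrix.mulVec, dotProduct]
      have h2 : ∀ k : ℕ, ∑ i, (hitMat G z ^ (k+1)) x i * (1 : V → ℝ) i = ∑ j, hitMat G z x j * (hitMat G z ^ k *ᵥ (1 : V → ℝ)) j := by
        intro k
        change (hitMat G z ^ (k+1) *ᵥ (1 : V → ℝ)) x = _
        rw [pow_succ', ← Matrix.mulVec_mulVec]; rfl
      simp_rw [h2]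
      rw [Summable.tsum_finsetSum (fun j _ => (hs j).mul_left _)]
      refine Finset.sum_congr rfl fun j _ => ?_
      rw [tsum_mul_left, e]
  rw [← hm_mulVec G hd z]
  conv_lhs => rw [key]
  ring

lemma Ssum_self [Fintype V] (G : SimpleGraph V) (hconn : G.Connected) (hd : ∀ x, 0 < degR G x) (z : V) :
    degR G z * Ssum G z z = ∑ x, degR G x := by
  have h : ∑ x, degR G x * Ssum G z x = ∑ x, (degR G x + ∑ y ∈ Finset.univ.filter (fun y => G.Adj x y), if y = z then 0 else Ssum G z y) :=
    Finset.sum_congr rfl fun x _ => Ssum_eq G hconn hd z x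
  have h2 : ∑ x, ∑ y ∈ Finset.univ.filter (fun y => G.Adj x y), (if y = z then 0 else Ssum G z y)
      = ∑ y, degR G y * (if y = z then 0 else Ssum G z y) := by
    simp only [Finset.sum_filter]
    rw [Finset.sum_comm]
    refine Finset.sum_congr rfl fun y _ => ?_
    rw [← Finset.sum_filter, Finset.sum_const, nsmul_eq_mul]
    simp [degR, G.adj_comm]
  rw [Finset.sum_add_distrib, h2] at h
  have h3 : ∑ x, degR G x * Ssum G z x - ∑ y, degR G y * (if y = z then 0 else Ssum G z y) = degR G z * Ssum G z z := by
    rw [← Finset.sum_sub_distrib, Finset.sum_eq_single z]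
    · simp
    · intro b _ hb; simp [hb]
    · simp
  linarith

lemma CC_lap [Fintype V] (G : SimpleGraph V) (hconn : G.Connected) (hd : ∀ x, 0 < degR G x) (x : V) :
    degR G x * coverCost G x - ∑ y ∈ Finset.univ.filter (fun y => G.Adj x y), coverCost G y
      = (Fintype.card V : ℝ) * degR G x - ∑ w, degR G w := by
  have hh : ∀ a z, hitting G a z = if a = z then 0 else Ssum G z a := fun a z => rfl
  simp only [coverCost]
  rw [Finset.sum_comm, Finset.mul_sum, ← Finset.sum_sub_distrib]
  have : ∀ z, degR G x * hitting G x z - ∑ y ∈ Finset.univ.filter (fun y => G.Adj x y), hitting G y z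
      = degR G x - if x = z then ∑ w, degR G w else 0 := by
    intro z
    have h := Ssum_eq G hconn hd z x
    simp only [hh]
    by_cases hxz : x = z
    · subst hxz
      have := Ssum_self G hconn hd x
      simp only [if_true]
      linarith
    · simp only [hxz, if_false]
      linarith
  simp only [this]
  rw [Finset.sum_sub_distrib]
  simp

lemma exists_hp (G : SimpleGraph V) (hconn : G.Connected) {l : ℕ} [NeZero l] (c : Fin l → V) :
    ∃ (h : V → ℕ) (p : V → V), (∀ i, h (c i) = 0) ∧
      (∀ x, x ∉ Set.range c → G.Adj x (p x) ∧ h (p x) + 1 = h x) ∧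
      (∀ x k, h x ≤ G.dist x (c k)) := by
  have hk : ∀ x, ∃ k, ∀ k', G.dist x (c k) ≤ G.dist x (c k') := by
    intro x
    obtain ⟨k, -, hk⟩ := Finset.exists_min_image Finset.univ (fun k => G.dist x (c k)) ⟨(0 : Fin l), Finset.mem_univ _⟩
    exact ⟨k, fun k' => hk k' (Finset.mem_univ _)⟩
  choose κ hκ using hk
  have hp : ∀ x, ∃ y, x ∉ Set.range c → G.Adj x y ∧ G.dist y (c (κ y)) + 1 = G.dist x (c (κ x)) := by
    intro x
    by_cases hx : x ∈ Set.range c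
    · exact ⟨x, fun h => absurd hx h⟩
    · obtain ⟨w, hw⟩ := hconn.exists_walk_length_eq_dist x (c (κ x))
      generalize hb : c (κ x) = b at w hw
      cases w with
      | nil => exact absurd ⟨_, hb⟩ hx
      | @cons _ y _ hxy w' =>
        refine ⟨y, fun _ => ⟨hxy, ?_⟩⟩
        subst hb
        have h1 := SimpleGraph.dist_le w'
        have h2 := hκ y (κ x)
        have h3 := hκ x (κ y)
        have h4 := hconn.dist_triangle (u := x) (v := y) (w := c (κ y))
        have h5 := SimpleGraph.dist_eq_one_iff_adj.mpr hxy
        rw [Walk.length_cons] at hw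
        omega
  choose p hp using hp
  refine ⟨fun x => G.dist x (c (κ x)), p, fun i => ?_, hp, hκ⟩
  have := hκ (c i) i
  simpa using this

lemma edge_struct [Fintype V] (G : SimpleGraph V) (n l : ℕ) [NeZero l]
    (hn : Fintype.card V = n) (huni : esize G = n)
    (hl : 3 ≤ l) (c : Fin l → V) (hinj : Function.Injective c)
    (hadj : ∀ i : Fin l, G.Adj (c i) (c (i + 1)))
    (h : V → ℕ) (p : V → V)
    (hp : ∀ x, x ∉ Set.range c → G.Adj x (p x) ∧ h (p x) + 1 = h x)
    (x y : V) (hxy : G.Adj x y) :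
    (x ∉ Set.range c ∧ y = p x) ∨ (y ∉ Set.range c ∧ x = p y) ∨ s(x, y) ∈ cycleEdges c := by
  have hF : ∀ x, ∃ e : G.edgeSet, (x ∉ Set.range c ∧ e.1 = s(x, p x)) ∨
      ∃ i, x = c i ∧ e.1 = s(c i, c (i+1)) := by
    intro x
    by_cases hx : x ∈ Set.range c
    · obtain ⟨i, rfl⟩ := hx
      exact ⟨⟨s(c i, c (i+1)), hadj i⟩, Or.inr ⟨i, rfl, rfl⟩⟩
    · exact ⟨⟨s(x, p x), (hp x hx).1⟩, Or.inl ⟨hx, rfl⟩⟩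
  choose F hF using hF
  have h2 : ∀ i : Fin l, i + 1 + 1 ≠ i := by
    intro i hi
    have h11 : (1 : Fin l) + 1 = 0 := by
      have : i + (1 + 1) = i + 0 := by rw [← add_assoc, hi, add_zero]
      exact add_left_cancel this
    have := congrArg Fin.val h11
    rw [Fin.val_add, Fin.val_one', Fin.val_zero, Nat.mod_eq_of_lt (show 1 < l by omega), Nat.mod_eq_of_lt (show 1 + 1 < l by omega)] at this
    omega
  have hFi : Function.Injective F := by
    intro a b hab
    rcases hF a with ⟨ha, ea⟩ | ⟨i, rfl, ea⟩ <;> rcases hF b with ⟨hb, eb⟩ | ⟨j, rfl, eb⟩ <;>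
      rw [hab, eb] at ea <;> rw [Sym2.eq_iff] at ea
    · rcases ea with ⟨e, _⟩ | ⟨e1, e2⟩
      · exact e.symm
      · have h1 := (hp a ha).2
        have h2 := (hp b hb).2
        rw [← e1] at h1
        rw [e2] at h2
        omega
    · exfalso
      rcases ea with ⟨e, _⟩ | ⟨_, e⟩
      · exact ha ⟨_, e⟩
      · exact ha ⟨_, e⟩
    · exfalso
      rcases ea with ⟨e, _⟩ | ⟨e, _⟩
      · exact hb ⟨_, e.symm⟩
      · exact hb ⟨_, e.symm⟩
    · rcases ea with ⟨e, _⟩ | ⟨e1, e2⟩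
      · exact e.symm
      · have e1 := hinj e1
        have e2 := hinj e2
        rw [e1] at e2
        exact absurd e2 (h2 i)
  have hbij : Function.Bijective F := by
    rw [Nat.bijective_iff_injective_and_card]
    refine ⟨hFi, ?_⟩
    rw [Nat.card_eq_fintype_card, hn]
    exact huni.symm
  obtain ⟨a, ha⟩ := hbij.2 ⟨s(x, y), hxy⟩
  rcases hF a with ⟨ha', ea⟩ | ⟨i, rfl, ea⟩
  · rw [ha, Sym2.eq_iff] at ea
    rcases ea with ⟨rfl, e⟩ | ⟨e, rfl⟩
    · exact Or.inl ⟨ha', e⟩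
    · exact Or.inr (Or.inl ⟨ha', e⟩)
  · rw [ha] at ea
    exact Or.inr (Or.inr ⟨i, ea.symm⟩)

lemma height_lap [Fintype V] (G : SimpleGraph V) (n l : ℕ) [NeZero l]
    (hn : Fintype.card V = n) (huni : esize G = n)
    (hl : 3 ≤ l) (c : Fin l → V) (hinj : Function.Injective c)
    (hadj : ∀ i : Fin l, G.Adj (c i) (c (i + 1)))
    (h : V → ℕ) (p : V → V) (hc : ∀ i, h (c i) = 0)
    (hp : ∀ x, x ∉ Set.range c → G.Adj x (p x) ∧ h (p x) + 1 = h x) (x : V) :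
    ∑ y ∈ Finset.univ.filter (fun y => G.Adj x y), (1 - ((h y : ℝ) - h x)) = 2 := by
  have hs := edge_struct G n l hn huni hl c hinj hadj h p hp
  by_cases hx : x ∈ Set.range c
  · obtain ⟨i, rfl⟩ := hx
    have hne : c (i + 1) ≠ c (i - 1) := by
      intro e
      have e := hinj e
      have h11 : (1 : Fin l) + 1 = 0 := by
        have : i + (1 + 1) = i + 0 := by rw [← add_assoc, e, sub_add_cancel, add_zero]
        exact add_left_cancel this
      have := congrArg Fin.val h11
      rw [Fin.val_add, Fin.val_one', Fin.val_zero, Nat.mod_eq_of_lt (show 1 < l by omega), Nat.mod_eq_of_lt (show 1 + 1 < l by omega)] at this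
      omega
    have hsub : ({c (i+1), c (i-1)} : Finset V) ⊆ Finset.univ.filter (fun y => G.Adj (c i) y) := by
      intro y hy
      simp only [Finset.mem_insert, Finset.mem_singleton] at hy
      rw [Finset.mem_filter]
      refine ⟨Finset.mem_univ _, ?_⟩
      rcases hy with rfl | rfl
      · exact hadj i
      · have := hadj (i - 1)
        rw [sub_add_cancel] at this
        exact this.symm
    rw [← Finset.sum_subset hsub, Finset.sum_pair hne]
    · simp only [hc]; norm_num
    · intro y hy hny
      rw [Finset.mem_filter] at hy
      rcases hs _ _ hy.2 with ⟨h1, _⟩ | ⟨h1, h2⟩ | ⟨j, hj⟩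
      · exact absurd ⟨i, rfl⟩ h1
      · have h3 := (hp y h1).2
        rw [← h2] at h3
        rw [← h3]; push_cast; ring
      · exfalso
        apply hny
        simp only [Finset.mem_insert, Finset.mem_singleton]
        rw [Sym2.eq_iff] at hj
        rcases hj with ⟨e1, e2⟩ | ⟨e1, e2⟩
        · left; rw [← e2, hinj e1]
        · right; rw [← e1, ← hinj e2, add_sub_cancel_right]
  · rw [Finset.sum_eq_single (p x)]
    · have := (hp x hx).2
      rw [← this]; push_cast; ring
    · intro y hy hny
      rw [Finset.mem_filter] at hy
      rcases hs _ _ hy.2 with ⟨_, h1⟩ | ⟨h1, h2⟩ | ⟨j, hj⟩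
      · exact absurd h1 hny
      · have h3 := (hp y h1).2
        rw [← h2] at h3
        rw [← h3]; push_cast; ring
      · exfalso
        rw [Sym2.eq_iff] at hj
        rcases hj with ⟨e1, e2⟩ | ⟨e1, e2⟩
        · exact hx ⟨_, e1⟩
        · exact hx ⟨_, e2⟩
    · intro hn
      exact absurd (Finset.mem_filter.mpr ⟨Finset.mem_univ _, (hp x hx).1⟩) hn

lemma height_dist [Fintype V] (G : SimpleGraph V) (hconn : G.Connected) (n l : ℕ) [NeZero l]
    (hn : Fintype.card V = n) (huni : esize G = n)
    (hl : 3 ≤ l) (c : Fin l → V) (hinj : Function.Injective c)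
    (hadj : ∀ i : Fin l, G.Adj (c i) (c (i + 1)))
    (h : V → ℕ) (p : V → V) (hc : ∀ i, h (c i) = 0)
    (hp : ∀ x, x ∉ Set.range c → G.Adj x (p x) ∧ h (p x) + 1 = h x)
    (hle : ∀ x k, h x ≤ G.dist x (c k)) (i : Fin l) (x : V)
    (hx : (G.deleteEdges (cycleEdges c)).Reachable (c i) x) : G.dist x (c i) = h x := by
  have hs := edge_struct G n l hn huni hl c hinj hadj h p hp
  have hroot : ∀ y, y ∉ Set.range c → p^[h y] y = p^[h (p y)] (p y) := by
    intro y hy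
    rw [← (hp y hy).2, Function.iterate_succ_apply]
  have hdist : ∀ m y, h y = m → G.dist y (p^[h y] y) ≤ h y := by
    intro m
    induction m with
    | zero => intro y hy; simp [hy]
    | succ m ih =>
      intro y hy
      have hyc : y ∉ Set.range c := by
        rintro ⟨k, rfl⟩
        rw [hc] at hy; omega
      rw [hroot y hyc]
      have h1 := hp y hyc
      have h2 := ih (p y) (by omega)
      have h4 := hconn.dist_triangle (u := y) (v := p y) (w := p^[h (p y)] (p y))
      have h5 := SimpleGraph.dist_eq_one_iff_adj.mpr h1.1
      omega
  have hinv : ∀ a b, (G.deleteEdges (cycleEdges c)).Walk a b → p^[h a] a = p^[h b] b := by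
    intro a b w
    induction w with
    | nil => rfl
    | cons hab _ ih =>
      rw [← ih]
      rw [SimpleGraph.deleteEdges_adj] at hab
      rcases hs _ _ hab.1 with ⟨h1, h2⟩ | ⟨h1, h2⟩ | h3
      · rw [hroot _ h1, h2]
      · rw [hroot _ h1, h2]
      · exact absurd h3 hab.2
  obtain ⟨w⟩ := hx
  have h1 := hinv _ _ w
  rw [hc] at h1
  have h2 := hdist _ x rfl
  rw [← h1] at h2
  exact le_antisymm h2 (hle x i)

/-- For an `n`-vertex unicyclic graph `G` with `x ∈ V(T_i)`,
`y ∈ V(T_j)`, one has `d(x,v_i) ≤ d(y,v_j)` iff `CC(x) ≥ CC(y)`. -/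
theorem coverCost_monotone [Fintype V] (G : SimpleGraph V) (n l : ℕ) [NeZero l]
    (hn : Fintype.card V = n) (hconn : G.Connected) (huni : esize G = n)
    (hl : 3 ≤ l) (c : Fin l → V) (hinj : Function.Injective c)
    (hadj : ∀ i : Fin l, G.Adj (c i) (c (i + 1)))
    (i j : Fin l) (x y : V)
    (hx : (G.deleteEdges (cycleEdges c)).Reachable (c i) x)
    (hy : (G.deleteEdges (cycleEdges c)).Reachable (c j) y) :
    G.dist x (c i) ≤ G.dist y (c j) ↔ coverCost G y ≤ coverCost G x := by
  obtain ⟨h, p, hc, hp, hle⟩ := exists_hp G hconn c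
  rw [height_dist G hconn n l hn huni hl c hinj hadj h p hc hp hle i x hx,
    height_dist G hconn n l hn huni hl c hinj hadj h p hc hp hle j y hy]
  have hlap := height_lap G n l hn huni hl c hinj hadj h p hc hp
  have : Nontrivial V := ⟨⟨_, _, (hadj 0).ne⟩⟩
  have hd : ∀ x, 0 < degR G x := by
    intro x
    obtain ⟨y, hy⟩ := hconn.preconnected.exists_adj_of_nontrivial x
    unfold degR
    exact_mod_cast Finset.card_pos.mpr ⟨y, Finset.mem_filter.mpr ⟨Finset.mem_univ _, hy⟩⟩
  have hdeg : ∀ x, degR G x = (G.degree x : ℝ) := by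
    intro x
    unfold degR
    rw [← SimpleGraph.card_neighborFinset_eq_degree]
    congr 2
    ext y; simp
  have hnf : ∀ x, G.neighborFinset x = Finset.univ.filter (fun y => G.Adj x y) := by
    intro x; ext y; simp
  have hsum : ∑ w, degR G w = 2 * (n : ℝ) := by
    simp only [hdeg]
    have := G.sum_degrees_eq_twice_card_edges
    have h2 : G.edgeFinset.card = n := by
      rw [← huni, esize, Nat.card_eq_fintype_card, SimpleGraph.edgeFinset_card]
    rw [h2] at this
    exact_mod_cast this
  have hzero : (G.lapMatrix ℝ).mulVec (fun x => coverCost G x + (n : ℝ) * h x) = 0 := by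
    funext x
    rw [SimpleGraph.lapMatrix_mulVec_apply, hnf, ← hdeg]
    have h1 := CC_lap G hconn hd x
    have h2 := hlap x
    rw [hn, hsum] at h1
    rw [Finset.sum_sub_distrib, Finset.sum_sub_distrib, Finset.sum_const, Finset.sum_const] at h2
    have h3 : ((Finset.univ.filter (fun y => G.Adj x y)).card : ℝ) = degR G x := rfl
    simp only [nsmul_eq_mul, h3] at h2
    rw [Finset.sum_add_distrib, ← Finset.mul_sum, Pi.zero_apply]
    linear_combination h1 + (n : ℝ) * h2
  have heq := (G.lapMatrix_mulVec_eq_zero_iff_forall_reachable).1 hzero x y (hconn x y)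
  have hn0 : (0 : ℝ) < n := by
    rw [← hn]; exact_mod_cast Fintype.card_pos
  constructor
  · intro hh
    have : (h x : ℝ) ≤ h y := by exact_mod_cast hh
    nlinarith
  · intro hh
    by_contra hlt
    have : (h y : ℝ) < h x := by exact_mod_cast not_le.mp hlt
    nlinarith
end
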